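/- arXiv:0805.2830 — 2 statements merged into one kernel-verified Lean document; each statement's English description precedes it below -/
import Mathlib

section
/- Assume A has complex eigenvalues λ_1, …, λ_d, …, λ_k, all nonzero, such that for every i there is a positive integer l_i with λ_i^{l_i} a positive integer, with |λ_1| = 1 and |λ_i| > 1 for all i = 2, …, d (where λ_1, …, λ_d are the roots of the minimal polynomial of A and d is its degree), and assume the support of μ is not parallel to a proper subspace of ℚ^k invariant under A. Then there exist constants α > 0, c > 0 and N ∈ ℕ such that for every integer p > N with gcd(det(A), p) = 1 and gcd(det(B), p) = 1, and every n ≥ c·p², one has ‖P_n − U‖ ≤ 2^{k−1}·exp(−α·n/p²). -/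
open scoped BigOperators
open Matrix

noncomputable section

/-- Distribution of the un-reduced chain `X₀ = 0`, `X_{n+1} = A·X_n + B_n` on `ℤ^k`,
where the `B_n` are i.i.d. with common distribution `μ`. -/
def chainDist {k : ℕ} (A : Matrix (Fin k) (Fin k) ℤ) (μ : (Fin k → ℤ) → ℝ) :
    ℕ → (Fin k → ℤ) → ℝ
  | 0 => fun x => if x = 0 then 1 else 0
  | n + 1 => fun x => ∑' y : Fin k → ℤ, chainDist A μ n y * μ (x - A.mulVec y)

/-- `P_n`, the distribution of `X_n = A·X_{n-1} + B_{n-1} (mod p)` on `(ℤ/pℤ)^k`. -/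
def chainDistMod {k : ℕ} (A : Matrix (Fin k) (Fin k) ℤ) (μ : (Fin k → ℤ) → ℝ) (p : ℕ)
    (n : ℕ) (x : Fin k → ZMod p) : ℝ :=
  ∑' y : {y : Fin k → ℤ // (fun i => ((y i : ZMod p))) = x}, chainDist A μ n y.val

/-- The uniform distribution `U` on `(ℤ/pℤ)^k`. -/
def unif (k p : ℕ) : ℝ := ((p : ℝ) ^ k)⁻¹

/-- The variation distance `‖P_n − U‖`. -/
def tvDist {k : ℕ} (A : Matrix (Fin k) (Fin k) ℤ) (μ : (Fin k → ℤ) → ℝ) (p : ℕ)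
    (n : ℕ) : ℝ :=
  (1 / 2) * ∑' x : Fin k → ZMod p, |chainDistMod A μ p n x - unif k p|

/-- `supp μ` is parallel to `v + W` for some proper subspace `W` of `ℚ^k` invariant under
`A`. -/
def ParallelInv {k : ℕ} (A : Matrix (Fin k) (Fin k) ℤ) (μ : (Fin k → ℤ) → ℝ) : Prop :=
  ∃ (W : Submodule ℚ (Fin k → ℚ)) (v : Fin k → ℚ), W ≠ ⊤ ∧
    (∀ w ∈ W, (A.map (Int.cast : ℤ → ℚ)).mulVec w ∈ W) ∧
    ∀ x : Fin k → ℤ, μ x ≠ 0 → (fun i => (x i : ℚ)) - v ∈ W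

/-- `V = {h − k : h, k ∈ supp μ}`. -/
def Vset {k : ℕ} (μ : (Fin k → ℤ) → ℝ) : Set (Fin k → ℤ) :=
  {x | ∃ h g : Fin k → ℤ, μ h ≠ 0 ∧ μ g ≠ 0 ∧ x = h - g}

/-- `d`, the degree of the minimal polynomial of `A` (over `ℚ`). -/
def minpolyDeg {k : ℕ} (A : Matrix (Fin k) (Fin k) ℤ) : ℕ :=
  (minpoly ℚ (A.map (Int.cast : ℤ → ℚ))).natDegree

/-- `V^{d−1} = {A^m x : x ∈ V, m = 0, …, d−1}`. -/
def VdSet {k : ℕ} (A : Matrix (Fin k) (Fin k) ℤ) (μ : (Fin k → ℤ) → ℝ) :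
    Set (Fin k → ℤ) :=
  {y | ∃ x ∈ Vset μ, ∃ m : ℕ, m < minpolyDeg A ∧ y = (A ^ m).mulVec x}

/-- The matrix `B = (y_1 … y_k)` with columns `y_1, …, y_k`. -/
def colMat {k : ℕ} (y : Fin k → (Fin k → ℤ)) : Matrix (Fin k) (Fin k) ℤ :=
  Matrix.of fun i j => y j i

/-!
By Plancherel, `4 ‖P_n − U‖²` is at most the sum of `|P̂_n(h)|²` over the nonzero frequencies
`h`, and `P̂_n(h)` is the product of `μ̂` along the orbit of `h` under `Aᵀ`. Each factor is bounded
by the spread of its frequency over `V`, so a block of `L ≥ d` consecutive factors contributes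
`exp(-c D(g))`, where `g` is the frequency at the start of the block and `D(g)` is the sum of the
squared distances of `⟨g, y_j⟩/p` to `ℤ`.

Choose `L` so that every `λ_i^L` is a positive integer. A frequency fixed by the `L`-step map `T`
contributes `exp(-c ⌊n/L⌋ D(h))`, and since `gcd(det B, p) = 1` these terms are dominated by a
Gaussian sum, of order `e^{-n/p²}`. A frequency that `T` moves cannot stay near zero: `T` satisfies
`(T - 1) ∏ (T - m) = 0` with integers `m ≥ 2`, and multiplication by `m` expands small distances,
so some `⟨T^s g, y_j⟩/p` is bounded away from `ℤ` once every `O(p)` steps. Such a frequency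
contributes `e^{-cn/p}`, which beats the number `p^k` of frequencies when `n ≥ c p²`.
-/

section UnitAddCircle

open AddCircle

lemma exists_coe_eq_and_norm_eq_abs (x : UnitAddCircle) :
    ∃ t : ℝ, (t : UnitAddCircle) = x ∧ ‖x‖ = |t| ∧ |t| ≤ 1 / 2 := by
  obtain ⟨s, rfl⟩ := QuotientAddGroup.mk_surjective x
  refine ⟨s - round s, ?_, UnitAddCircle.norm_eq, abs_sub_round s⟩
  rw [AddCircle.coe_sub, sub_eq_self, AddCircle.coe_eq_zero_iff]
  exact ⟨round s, by simp⟩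

lemma norm_nsmul_eq_of_mul_norm_le {m : ℕ} {x : UnitAddCircle} (h : m * ‖x‖ ≤ 1 / 2) :
    ‖m • x‖ = m * ‖x‖ := by
  obtain ⟨t, rfl, ht, -⟩ := exists_coe_eq_and_norm_eq_abs x
  have hmt : |m * t| = m * ‖(t : UnitAddCircle)‖ := by rw [abs_mul, Nat.abs_cast, ht]
  rw [← hmt, ← AddCircle.coe_nsmul, nsmul_eq_mul, AddCircle.norm_coe_eq_abs_iff _ one_ne_zero, hmt,
    abs_one]
  exact h

lemma exists_le_norm_pow_nsmul {m N : ℕ} (hm : 2 ≤ m) {x : UnitAddCircle}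
    (hx : 1 ≤ 2 ^ N * ‖x‖) : ∃ s ≤ N, 1 / (2 * (m : ℝ)) ≤ ‖m ^ s • x‖ := by
  by_contra! hsmall
  have hm0 : (0 : ℝ) < 2 * m := by positivity
  have hgrow : ∀ s ≤ N + 1, (m : ℝ) ^ s * ‖x‖ = ‖m ^ s • x‖ := by
    intro s
    induction s with
    | zero => simp
    | succ s ih =>
      intro hs
      have hlt : ‖m ^ s • x‖ * (2 * m) < 1 := (lt_div_iff₀ hm0).1 (hsmall s (by omega))
      rw [pow_succ', pow_succ', mul_smul, norm_nsmul_eq_of_mul_norm_le (by linarith),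
        ← ih (by omega), mul_assoc]
  have hle : ‖m ^ (N + 1) • x‖ ≤ 1 / 2 := by
    simpa using AddCircle.norm_le_half_period (1 : ℝ) (x := m ^ (N + 1) • x) one_ne_zero
  have hpow : (2 : ℝ) ^ (N + 1) ≤ (m : ℝ) ^ (N + 1) := by gcongr; exact_mod_cast hm
  have := mul_le_mul_of_nonneg_right hpow (norm_nonneg x)
  rw [hgrow _ le_rfl, pow_succ] at this
  linarith

lemma re_toCircle_le (x : UnitAddCircle) : (toCircle x : ℂ).re ≤ 1 - 8 * ‖x‖ ^ 2 := by
  obtain ⟨t, rfl, ht, htle⟩ := exists_coe_eq_and_norm_eq_abs x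
  have habs : |2 * Real.pi * t| ≤ Real.pi := by
    rw [abs_mul, abs_of_pos Real.two_pi_pos]
    nlinarith [Real.pi_pos]
  calc (toCircle (t : UnitAddCircle) : ℂ).re = Real.cos (2 * Real.pi * t) := by
        rw [toCircle_apply_mk, Circle.coe_exp, Complex.exp_ofReal_mul_I_re, div_one]
    _ ≤ 1 - 2 / Real.pi ^ 2 * (2 * Real.pi * t) ^ 2 := Real.cos_le_one_sub_mul_cos_sq habs
    _ = 1 - 8 * ‖(t : UnitAddCircle)‖ ^ 2 := by
        rw [ht, sq_abs]
        field_simp [Real.pi_ne_zero]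
        ring

lemma norm_toAddCircle {p : ℕ} [NeZero p] (z : ZMod p) :
    ‖ZMod.toAddCircle z‖ = (z.valMinAbs.natAbs : ℝ) / p := by
  rw [← ZMod.natCast_zmod_val z, ZMod.toAddCircle_natCast, ZMod.natCast_zmod_val,
    ZMod.valMinAbs_natAbs_eq_min]
  have := AddCircle.norm_div_natCast (p := (1 : ℝ)) (m := z.val) (n := p)
  rw [mul_one, one_mul, Nat.mod_eq_of_lt z.val_lt] at this
  exact this

lemma inv_le_norm_toAddCircle {p : ℕ} [NeZero p] {z : ZMod p} (hz : z ≠ 0) :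
    (p : ℝ)⁻¹ ≤ ‖ZMod.toAddCircle z‖ := by
  have hz' : z.valMinAbs.natAbs ≠ 0 := by simpa using hz
  rw [norm_toAddCircle, inv_eq_one_div]
  gcongr
  exact_mod_cast Nat.one_le_iff_ne_zero.2 hz'

end UnitAddCircle

section Escape

open Polynomial

variable {R V κ : Type*} [CommRing R] [AddCommGroup V] [Module R V]

lemma div_le_norm_or_div_le_norm (φ : V →+ UnitAddCircle) {m : ℕ} {δ : ℝ} {v w : V}
    (h : δ ≤ ‖φ (w - m • v)‖) : δ / (m + 1) ≤ ‖φ w‖ ∨ δ / (m + 1) ≤ ‖φ v‖ := by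
  by_contra! hlt
  obtain ⟨hw, hv⟩ := hlt
  have hm : (0 : ℝ) < m + 1 := by positivity
  have hle : ‖φ (w - m • v)‖ ≤ ‖φ w‖ + m * ‖φ v‖ := by
    rw [map_sub, map_nsmul]
    exact (norm_sub_le _ _).trans (by gcongr; exact norm_nsmul_le)
  rw [lt_div_iff₀ hm] at hw hv
  nlinarith [mul_le_mul_of_nonneg_left hv.le (Nat.cast_nonneg' (α := ℝ) m)]

lemma exists_div_le_norm_pow {φ : κ → V →+ UnitAddCircle} {T : Module.End R V} {m N : ℕ} {δ : ℝ}
    {u : V} (h : ∃ s ≤ N, ∃ j, δ ≤ ‖φ j ((T ^ s) (T u - m • u))‖) :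
    ∃ s ≤ N + 1, ∃ j, δ / (m + 1) ≤ ‖φ j ((T ^ s) u)‖ := by
  obtain ⟨s, hs, j, hj⟩ := h
  rw [map_sub, map_nsmul, ← Module.End.mul_apply, ← pow_succ] at hj
  rcases div_le_norm_or_div_le_norm (φ j) hj with h | h
  · exact ⟨s + 1, by omega, j, h⟩
  · exact ⟨s, by omega, j, h⟩

/-- The distance from `0` that an orbit of an endomorphism `T` killed by `∏ (T - m)`, `m ∈ ms`,
is shown to reach in some coordinate. -/
def escapeGap (ms : Multiset ℕ) : ℝ := (2 * (ms.map fun m : ℕ => (m : ℝ) + 1).prod)⁻¹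

lemma escapeGap_cons (m : ℕ) (ms : Multiset ℕ) :
    escapeGap (m ::ₘ ms) = escapeGap ms / (m + 1) := by
  rw [escapeGap, escapeGap, Multiset.map_cons, Multiset.prod_cons, div_eq_mul_inv, ← mul_inv]
  ring

lemma escapeGap_pos (ms : Multiset ℕ) : 0 < escapeGap ms := by
  induction ms using Multiset.induction with
  | empty => simp [escapeGap]
  | cons m ms ih => rw [escapeGap_cons]; positivity

lemma escapeGap_le_half (ms : Multiset ℕ) : escapeGap ms ≤ 1 / 2 := by
  induction ms using Multiset.induction with
  | empty => simp [escapeGap]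
  | cons m ms ih =>
    rw [escapeGap_cons]
    exact (div_le_self (escapeGap_pos ms).le (by simp)).trans ih

lemma escapeGap_cons_le {m : ℕ} (hm : 0 < m) (ms : Multiset ℕ) :
    escapeGap (m ::ₘ ms) ≤ 1 / (2 * m) := by
  rw [escapeGap_cons, div_le_div_iff₀ (by positivity) (by positivity)]
  nlinarith [escapeGap_le_half ms, (Nat.cast_pos (α := ℝ)).2 hm]

/-- Either `T` acts on `u` as an expanding integer `m`, or `(T - m) u` is killed by the remaining
factors and one induces. -/
lemma exists_escapeGap_le_norm_pow {φ : κ → V →+ UnitAddCircle} {N : ℕ}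
    (hφ : ∀ u ≠ 0, ∃ j, 1 ≤ 2 ^ N * ‖φ j u‖) (T : Module.End R V) {ms : Multiset ℕ}
    (hms : ∀ m ∈ ms, 2 ≤ m) {u : V} (hu : u ≠ 0)
    (hT : aeval T (ms.map fun m : ℕ => (X - (m : ℤ[X]))).prod u = 0) :
    ∃ s ≤ N + ms.card, ∃ j, escapeGap ms ≤ ‖φ j ((T ^ s) u)‖ := by
  induction ms using Multiset.induction generalizing u with
  | empty => exact absurd (by simpa using hT) hu
  | cons m ms ih =>
    have hm : 2 ≤ m := hms m (Multiset.mem_cons_self m ms)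
    rw [Multiset.map_cons, Multiset.prod_cons, mul_comm, map_mul, map_sub, aeval_X,
      map_natCast, Module.End.mul_apply, LinearMap.sub_apply, Module.End.natCast_apply] at hT
    by_cases heig : T u - m • u = 0
    · have hpow (s : ℕ) : (T ^ s) u = m ^ s • u := by
        induction s with
        | zero => simp
        | succ s ihs => rw [pow_succ', Module.End.mul_apply, ihs, map_nsmul, sub_eq_zero.1 heig,
            smul_smul, pow_succ]
      obtain ⟨j, hj⟩ := hφ u hu
      obtain ⟨s, hs, hle⟩ := exists_le_norm_pow_nsmul hm hj
      refine ⟨s, by omega, j, (escapeGap_cons_le (by omega) ms).trans ?_⟩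
      rwa [hpow, map_nsmul]
    · rw [Multiset.card_cons, escapeGap_cons]
      exact exists_div_le_norm_pow
        (ih (fun m' hm' => hms m' (Multiset.mem_cons_of_mem hm')) heig hT)

lemma exists_escapeGap_le_norm_pow_of_apply_ne {φ : κ → V →+ UnitAddCircle} {N : ℕ}
    (hφ : ∀ u ≠ 0, ∃ j, 1 ≤ 2 ^ N * ‖φ j u‖) {T : Module.End R V} {ms : Multiset ℕ}
    (hms : ∀ m ∈ ms, 2 ≤ m)
    (hT : aeval T ((X - 1) * (ms.map fun m : ℕ => (X - (m : ℤ[X]))).prod) = 0)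
    {u : V} (hu : T u ≠ u) :
    ∃ s ≤ N + ms.card + 1, ∃ j, escapeGap (1 ::ₘ ms) ≤ ‖φ j ((T ^ s) u)‖ := by
  have hkill : aeval T (ms.map fun m : ℕ => (X - (m : ℤ[X]))).prod (T u - 1 • u) = 0 := by
    rw [mul_comm, map_mul, map_sub, aeval_X, map_one] at hT
    simpa using LinearMap.congr_fun hT u
  rw [escapeGap_cons]
  exact exists_div_le_norm_pow
    (exists_escapeGap_le_norm_pow hφ T hms (by rwa [one_smul, sub_ne_zero]) hkill)

end Escape

section TwoPoints

open ComplexConjugate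

lemma norm_two_point_le {r s t : ℝ} {u v : ℂ} (hr : 0 ≤ r) (hs : 0 ≤ s) (hrs : r + s ≤ 1)
    (hu : ‖u‖ = 1) (hv : ‖v‖ = 1) (ht : 0 ≤ t) (huv : (u * conj v).re ≤ 1 - t) :
    ‖(r : ℂ) * u + s * v‖ ≤ r + s - r * s * t := by
  have hrs0 : 0 ≤ r * s := mul_nonneg hr hs
  have hsq : ‖(r : ℂ) * u + s * v‖ ^ 2 = r ^ 2 + s ^ 2 + 2 * (r * s * (u * conj v).re) := by
    have hre : ((r : ℂ) * u * conj ((s : ℂ) * v)).re = r * s * (u * conj v).re := by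
      rw [map_mul, Complex.conj_ofReal, mul_mul_mul_comm, ← Complex.ofReal_mul,
        Complex.re_ofReal_mul]
    rw [Complex.sq_norm, Complex.normSq_add, hre, map_mul, map_mul, Complex.normSq_ofReal,
      Complex.normSq_ofReal, ← Complex.sq_norm u, ← Complex.sq_norm v, hu, hv]
    ring
  have hre := (abs_le.1 (Complex.abs_re_le_norm (u * conj v))).1
  rw [norm_mul, RCLike.norm_conj, hu, hv] at hre
  refine le_of_sq_le_sq ?_ (by nlinarith)
  rw [hsq]
  nlinarith [mul_le_mul_of_nonneg_left huv hrs0,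
    mul_nonneg (mul_nonneg hrs0 ht) (sub_nonneg.2 hrs), sq_nonneg (r * s * t)]

variable {α : Type*} {f : α → ℝ} {χ : α → ℂ}

lemma norm_ofReal_mul_eq (hf : ∀ z, 0 ≤ f z) (hχ : ∀ z, ‖χ z‖ = 1) (z : α) :
    ‖(f z : ℂ) * χ z‖ = f z := by
  rw [norm_mul, hχ, mul_one, Complex.norm_of_nonneg (hf z)]

lemma summable_ofReal_mul (hf : ∀ z, 0 ≤ f z) (hf1 : Summable f) (hχ : ∀ z, ‖χ z‖ = 1) :
    Summable fun z => (f z : ℂ) * χ z :=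
  .of_norm (hf1.congr fun z => (norm_ofReal_mul_eq hf hχ z).symm)

lemma norm_tsum_ofReal_mul_le (hf : ∀ z, 0 ≤ f z) (hf1 : Summable f) (hχ : ∀ z, ‖χ z‖ = 1) :
    ‖∑' z, (f z : ℂ) * χ z‖ ≤ ∑' z, f z := by
  refine (norm_tsum_le_tsum_norm (summable_ofReal_mul hf hf1 hχ).norm).trans_eq ?_
  exact tsum_congr (norm_ofReal_mul_eq hf hχ)

lemma norm_tsum_ofReal_mul_le_one_sub (hf : ∀ z, 0 ≤ f z) (hf1 : HasSum f 1)
    (hχ : ∀ z, ‖χ z‖ = 1) {a b : α} {t : ℝ} (ht : 0 ≤ t) (hab : (χ a * conj (χ b)).re ≤ 1 - t) :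
    ‖∑' z, (f z : ℂ) * χ z‖ ≤ 1 - f a * f b * t := by
  rcases eq_or_ne a b with rfl | hne
  · have ht0 : t = 0 := by
      rw [Complex.mul_conj, ← Complex.sq_norm, hχ, one_pow, Complex.ofReal_one,
        Complex.one_re] at hab
      linarith
    simpa [ht0, hf1.tsum_eq] using norm_tsum_ofReal_mul_le hf hf1.summable hχ
  · classical
    have hsplit := (summable_ofReal_mul hf hf1.summable hχ).sum_add_tsum_subtype_compl {a, b}
    have hmass := hf1.summable.sum_add_tsum_subtype_compl {a, b}
    rw [Finset.sum_pair hne] at hsplit hmass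
    rw [hf1.tsum_eq] at hmass
    have hrest := norm_tsum_ofReal_mul_le (fun x : {x // x ∉ ({a, b} : Finset α)} => hf x)
      (hf1.summable.subtype _) (fun x => hχ x)
    have hpair := norm_two_point_le (hf a) (hf b)
      (by linarith [(norm_nonneg _).trans hrest]) (hχ a) (hχ b) ht hab
    rw [← hsplit]
    linarith [norm_add_le ((f a : ℂ) * χ a + f b * χ b)
      (∑' x : {x // x ∉ ({a, b} : Finset α)}, (f x : ℂ) * χ x)]

end TwoPoints

section Frequencies

variable {ι : Type*} (p : ℕ)

/-- Reduction of integer vectors modulo `p`. -/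
def redVec : (ι → ℤ) →+ (ι → ZMod p) := (Int.castAddHom (ZMod p)).compLeft ι

variable [Fintype ι]

/-- The characteristic function `h ↦ E exp(2πi h·Z / p)` of a random vector `Z` of law `f`
on `ℤ^ι`, for frequencies `h` modulo `p`. -/
def modFourier [NeZero p] (f : (ι → ℤ) → ℝ) (h : ι → ZMod p) : ℂ :=
  ∑' z, (f z : ℂ) * ZMod.stdAddChar (h ⬝ᵥ redVec p z)

/-- The angle `h·x / p` in `ℝ/ℤ` of the frequency `h` at the integer point `x`; its norm is the
distance of `h·x / p` from the nearest integer. -/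
def phase [NeZero p] (x : ι → ℤ) : (ι → ZMod p) →+ UnitAddCircle :=
  ZMod.toAddCircle.comp (.mk' (· ⬝ᵥ redVec p x) fun g h => add_dotProduct g h _)

/-- The sum over `j` of the squared distances of `h·y_j / p` from the nearest integers. -/
def dispersion {κ : Type*} [Fintype κ] [NeZero p] (y : κ → ι → ℤ) (h : ι → ZMod p) : ℝ :=
  ∑ j, ‖phase p (y j) h‖ ^ 2

/-- The action `h ↦ hA` of an integer matrix on row vectors modulo `p`. -/
def freqMap [DecidableEq ι] (A : Matrix ι ι ℤ) : Module.End (ZMod p) (ι → ZMod p) :=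
  Matrix.toLin' (Aᵀ.map (Int.castRingHom (ZMod p)))

lemma dispersion_nonneg {κ : Type*} [Fintype κ] [NeZero p] (y : κ → ι → ℤ) (h : ι → ZMod p) :
    0 ≤ dispersion p y h := Finset.sum_nonneg fun _ _ => sq_nonneg _

variable {p}

lemma redVec_mulVec (A : Matrix ι ι ℤ) (x : ι → ℤ) :
    redVec p (A *ᵥ x) = A.map (Int.castRingHom (ZMod p)) *ᵥ redVec p x :=
  funext fun i => RingHom.map_mulVec (Int.castRingHom (ZMod p)) A x i

variable [DecidableEq ι] (A : Matrix ι ι ℤ)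

lemma freqMap_dotProduct_redVec (h : ι → ZMod p) (x : ι → ℤ) :
    freqMap p A h ⬝ᵥ redVec p x = h ⬝ᵥ redVec p (A *ᵥ x) := by
  rw [redVec_mulVec, dotProduct_mulVec, freqMap, toLin'_apply, transpose_map, mulVec_transpose]

lemma phase_freqMap [NeZero p] (x : ι → ℤ) (h : ι → ZMod p) :
    phase p x (freqMap p A h) = phase p (A *ᵥ x) h :=
  congrArg ZMod.toAddCircle (freqMap_dotProduct_redVec A h x)

lemma aeval_freqMap (P : Polynomial ℤ) :
    Polynomial.aeval (freqMap p A) P = freqMap p (Polynomial.aeval A P) := by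
  have htranspose : (Polynomial.aeval A P)ᵀ = Polynomial.aeval Aᵀ P := by
    simp only [Polynomial.aeval_eq_sum_range, transpose_sum, transpose_smul, transpose_pow]
  rw [freqMap, freqMap, htranspose]
  exact Polynomial.aeval_algHom_apply
    ((Matrix.toLinAlgEquiv' (R := ZMod p) (n := ι)).toRingHom.comp
      (Int.castRingHom (ZMod p)).mapMatrix).toIntAlgHom Aᵀ P

lemma freqMap_pow (n : ℕ) : freqMap p (A ^ n) = freqMap p A ^ n := by
  simpa using (aeval_freqMap (p := p) A (Polynomial.X ^ n)).symm

lemma freqMap_injective {A : Matrix ι ι ℤ} (hA : Int.gcd A.det p = 1) :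
    Function.Injective (freqMap p A) := by
  have hdet : IsUnit (Aᵀ.map (Int.castRingHom (ZMod p))) := by
    rw [Matrix.isUnit_iff_isUnit_det, ← RingHom.mapMatrix_apply, ← RingHom.map_det, det_transpose,
      eq_intCast, ZMod.coe_int_isUnit_iff_isCoprime]
    exact (Int.isCoprime_iff_gcd_eq_one.2 hA).symm
  exact Matrix.mulVec_injective_of_isUnit hdet

end Frequencies

section Law

variable {ι : Type*} [Fintype ι] {f : (ι → ℤ) → ℝ}

lemma norm_modFourier_le_exp_norm_sq {p : ℕ} [NeZero p] (hf : ∀ z, 0 ≤ f z) (hf1 : HasSum f 1)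
    (h : ι → ZMod p) (a b : ι → ℤ) :
    ‖modFourier p f h‖ ≤
      Real.exp (-(8 * (f a * f b) * ‖phase p (a - b) h‖ ^ 2)) := by
  have hre : (ZMod.stdAddChar (h ⬝ᵥ redVec p a) *
      starRingEnd ℂ (ZMod.stdAddChar (h ⬝ᵥ redVec p b)) : ℂ).re ≤
        1 - 8 * ‖phase p (a - b) h‖ ^ 2 := by
    rw [← AddChar.map_neg_eq_conj, ← AddChar.map_add_eq_mul, ← sub_eq_add_neg, ← dotProduct_sub,
      ← map_sub]
    exact re_toCircle_le _
  refine (norm_tsum_ofReal_mul_le_one_sub hf hf1 (fun z => AddChar.norm_apply _ _)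
    (by positivity) hre).trans ?_
  refine le_trans (le_of_eq ?_) (Real.one_sub_le_exp_neg _)
  ring

lemma inv_sum_inv_mul_sum_le {κ : Type*} [Fintype κ] [Nonempty κ] {c d : κ → ℝ} {x : ℝ}
    (hc : ∀ j, 0 < c j) (h : ∀ j, c j * d j ≤ x) : (∑ j, (c j)⁻¹)⁻¹ * ∑ j, d j ≤ x := by
  have hpos : 0 < ∑ j, (c j)⁻¹ :=
    Finset.sum_pos (fun j _ => inv_pos.2 (hc j)) Finset.univ_nonempty
  rw [inv_mul_le_iff₀ hpos, Finset.sum_mul]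
  exact Finset.sum_le_sum fun j _ => (le_inv_mul_iff₀ (hc j)).2 (h j)

lemma exists_norm_modFourier_le_exp_dispersion {κ : Type*} [Fintype κ] [Nonempty κ]
    (hf : ∀ z, 0 ≤ f z) (hf1 : HasSum f 1) {a b : κ → ι → ℤ} (ha : ∀ j, f (a j) ≠ 0)
    (hb : ∀ j, f (b j) ≠ 0) :
    ∃ c : ℝ, 0 < c ∧ ∀ (p : ℕ) [NeZero p] (h : ι → ZMod p),
      ‖modFourier p f h‖ ≤ Real.exp (-(c * dispersion p (a - b) h)) := by
  have hpos (j : κ) : 0 < 8 * (f (a j) * f (b j)) := by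
    have := (hf (a j)).lt_of_ne' (ha j)
    have := (hf (b j)).lt_of_ne' (hb j)
    positivity
  refine ⟨(∑ j, (8 * (f (a j) * f (b j)))⁻¹)⁻¹, inv_pos.2 (Finset.sum_pos
    (fun j _ => inv_pos.2 (hpos j)) Finset.univ_nonempty), fun p _ h => ?_⟩
  rcases (norm_nonneg (modFourier p f h)).eq_or_lt' with h0 | h0
  · rw [h0]
    exact (Real.exp_pos _).le
  · rw [← Real.log_le_iff_le_exp h0, le_neg]
    refine inv_sum_inv_mul_sum_le hpos fun j => ?_
    rw [le_neg, Real.log_le_iff_le_exp h0]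
    exact norm_modFourier_le_exp_norm_sq hf hf1 h (a j) (b j)

end Law

section Chain

variable {k : ℕ} {A : Matrix (Fin k) (Fin k) ℤ} {μ : (Fin k → ℤ) → ℝ}

lemma chainDist_nonneg (hμ0 : ∀ x, 0 ≤ μ x) (n : ℕ) (x : Fin k → ℤ) : 0 ≤ chainDist A μ n x := by
  induction n generalizing x with
  | zero => simp only [chainDist]; positivity
  | succ n ih => exact tsum_nonneg fun y => mul_nonneg (ih y) (hμ0 _)

/-- The change of variables `(x, y) ↦ (y, x - A y)`: from a value of `X_{n+1}` and one of `X_n` to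
the value of `X_n` and that of the increment `B_n`. -/
def stepEquiv (A : Matrix (Fin k) (Fin k) ℤ) :
    (Fin k → ℤ) × (Fin k → ℤ) ≃ (Fin k → ℤ) × (Fin k → ℤ) where
  toFun q := (q.2, q.1 - A *ᵥ q.2)
  invFun q := (q.2 + A *ᵥ q.1, q.1)
  left_inv q := by simp
  right_inv q := by simp

lemma hasSum_chainDist (hμ0 : ∀ x, 0 ≤ μ x) (hμ1 : HasSum μ 1) (n : ℕ) :
    HasSum (chainDist A μ n) 1 := by
  induction n with
  | zero => exact hasSum_ite_eq 0 1
  | succ n ih =>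
    have hprod : HasSum (fun q : (Fin k → ℤ) × (Fin k → ℤ) => chainDist A μ n q.1 * μ q.2) 1 := by
      simpa using ih.mul hμ1 (ih.summable.mul_of_nonneg hμ1.summable (chainDist_nonneg hμ0 n) hμ0)
    have hstep := (stepEquiv A).hasSum_iff.2 hprod
    exact hstep.prod_fiberwise fun x => (hstep.summable.prod_factor x).hasSum

variable {p : ℕ} [NeZero p]

lemma summable_modFourier {f : (Fin k → ℤ) → ℝ} (hf : ∀ z, 0 ≤ f z) (hf1 : Summable f)
    (h : Fin k → ZMod p) :
    Summable fun z => (f z : ℂ) * ZMod.stdAddChar (h ⬝ᵥ redVec p z) :=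
  summable_ofReal_mul hf hf1 fun _ => AddChar.norm_apply _ _

lemma modFourier_zero_right {f : (Fin k → ℤ) → ℝ} (hf1 : HasSum f 1) : modFourier p f 0 = 1 := by
  simp only [modFourier, zero_dotProduct, AddChar.map_zero_eq_one, mul_one]
  rw [← Complex.ofReal_tsum, hf1.tsum_eq, Complex.ofReal_one]

lemma modFourier_chainDist_zero (h : Fin k → ZMod p) : modFourier p (chainDist A μ 0) h = 1 := by
  rw [modFourier, tsum_eq_single 0]
  · simp [chainDist]
  · intro z hz
    simp [chainDist, hz]

lemma modFourier_chainDist_succ (hμ0 : ∀ x, 0 ≤ μ x) (hμ1 : HasSum μ 1) (n : ℕ)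
    (h : Fin k → ZMod p) :
    modFourier p (chainDist A μ (n + 1)) h =
      modFourier p (chainDist A μ n) (freqMap p A h) * modFourier p μ h := by
  have hX := summable_modFourier (chainDist_nonneg hμ0 n)
    (hasSum_chainDist (A := A) hμ0 hμ1 n).summable (freqMap p A h)
  have hB := summable_modFourier hμ0 hμ1.summable h
  have hprod := summable_mul_of_summable_norm hX.norm hB.norm
  rw [modFourier, modFourier, modFourier, tsum_mul_tsum_of_summable_norm hX.norm hB.norm,
    ← (stepEquiv A).tsum_eq]
  refine Eq.trans ?_ ((stepEquiv A).summable_iff.2 hprod).tsum_prod.symm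
  refine tsum_congr fun x => ?_
  rw [chainDist, Complex.ofReal_tsum, ← tsum_mul_right]
  refine tsum_congr fun y => ?_
  have hsplit : h ⬝ᵥ redVec p x =
      freqMap p A h ⬝ᵥ redVec p y + h ⬝ᵥ redVec p (x - A *ᵥ y) := by
    rw [freqMap_dotProduct_redVec, ← dotProduct_add, ← map_add, add_sub_cancel]
  rw [hsplit, AddChar.map_add_eq_mul, Complex.ofReal_mul, mul_mul_mul_comm]
  rfl

lemma modFourier_chainDist (hμ0 : ∀ x, 0 ≤ μ x) (hμ1 : HasSum μ 1) (n : ℕ) (h : Fin k → ZMod p) :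
    modFourier p (chainDist A μ n) h =
      ∏ t ∈ Finset.range n, modFourier p μ ((freqMap p A ^ t) h) := by
  induction n generalizing h with
  | zero => rw [modFourier_chainDist_zero, Finset.range_zero, Finset.prod_empty]
  | succ n ih =>
    rw [modFourier_chainDist_succ hμ0 hμ1, ih, Finset.prod_range_succ', pow_zero,
      Module.End.one_apply]
    simp only [pow_succ, Module.End.mul_apply]

end Chain

section Plancherel

open ComplexConjugate

variable {ι : Type*} [Fintype ι] [DecidableEq ι] {p : ℕ} [NeZero p]

lemma sum_stdAddChar_dotProduct (z : ι → ZMod p) :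
    ∑ h : ι → ZMod p, (ZMod.stdAddChar (h ⬝ᵥ z) : ℂ) =
      if z = 0 then (p : ℂ) ^ Fintype.card ι else 0 := by
  split_ifs with hz
  · simp [hz]
  · obtain ⟨i, hi⟩ := Function.ne_iff.1 hz
    let ψ : AddChar (ι → ZMod p) ℂ := ZMod.stdAddChar.compAddMonoidHom
      ⟨⟨fun h => h ⬝ᵥ z, zero_dotProduct z⟩, fun g h => add_dotProduct g h z⟩
    refine AddChar.sum_eq_zero_iff_ne_zero (ψ := ψ) |>.2 fun hψ => hi ?_
    have hψi : (ZMod.stdAddChar (Pi.single i 1 ⬝ᵥ z) : ℂ) = 1 := DFunLike.congr_fun hψ _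
    rw [single_one_dotProduct, ← AddChar.map_zero_eq_one (ZMod.stdAddChar (N := p))] at hψi
    exact ZMod.injective_stdAddChar hψi

lemma sum_norm_sq_sum_mul_stdAddChar (f : (ι → ZMod p) → ℂ) :
    ∑ h : ι → ZMod p, ‖∑ x, f x * ZMod.stdAddChar (h ⬝ᵥ x)‖ ^ 2 =
      (p : ℝ) ^ Fintype.card ι * ∑ x, ‖f x‖ ^ 2 := by
  have hexpand (h : ι → ZMod p) : (‖∑ x, f x * ZMod.stdAddChar (h ⬝ᵥ x)‖ : ℂ) ^ 2 =
      ∑ x, ∑ y, f x * conj (f y) * ZMod.stdAddChar (h ⬝ᵥ (x - y)) := by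
    rw [← Complex.mul_conj', map_sum, Finset.sum_mul_sum]
    refine Finset.sum_congr rfl fun x _ => Finset.sum_congr rfl fun y _ => ?_
    rw [map_mul, ← AddChar.map_neg_eq_conj, dotProduct_sub, sub_eq_add_neg,
      AddChar.map_add_eq_mul, mul_mul_mul_comm]
  have hcomplex : ∑ h : ι → ZMod p, (‖∑ x, f x * ZMod.stdAddChar (h ⬝ᵥ x)‖ : ℂ) ^ 2 =
      (p : ℂ) ^ Fintype.card ι * ∑ x, (‖f x‖ : ℂ) ^ 2 := by
    simp_rw [hexpand]
    rw [Finset.sum_comm, Finset.mul_sum]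
    refine Finset.sum_congr rfl fun x _ => ?_
    rw [Finset.sum_comm]
    simp_rw [← Finset.mul_sum, sum_stdAddChar_dotProduct, sub_eq_zero]
    rw [Finset.sum_eq_single_of_mem x (Finset.mem_univ x) fun y _ hy => by simp [hy.symm],
      if_pos rfl, Complex.mul_conj', mul_comm]
  exact_mod_cast hcomplex

end Plancherel

section VariationDistance

variable {k : ℕ} {A : Matrix (Fin k) (Fin k) ℤ} {μ : (Fin k → ℤ) → ℝ} {p : ℕ} [NeZero p]

lemma sum_chainDistMod_mul_stdAddChar (hμ0 : ∀ x, 0 ≤ μ x) (hμ1 : HasSum μ 1) (n : ℕ)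
    (h : Fin k → ZMod p) :
    ∑ x, (chainDistMod A μ p n x : ℂ) * ZMod.stdAddChar (h ⬝ᵥ x) =
      modFourier p (chainDist A μ n) h := by
  have hsum := summable_modFourier (chainDist_nonneg hμ0 n)
    (hasSum_chainDist (A := A) hμ0 hμ1 n).summable h
  rw [modFourier, ← (hsum.hasSum.tsum_fiberwise (redVec p)).tsum_eq, tsum_fintype]
  refine Finset.sum_congr rfl fun x _ => ?_
  rw [chainDistMod, Complex.ofReal_tsum, ← tsum_mul_right]
  refine tsum_congr fun y => ?_
  rw [show redVec p y.1 = x from y.2]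

lemma sum_unif_mul_stdAddChar (h : Fin k → ZMod p) :
    ∑ x, (unif k p : ℂ) * ZMod.stdAddChar (h ⬝ᵥ x) = if h = 0 then 1 else 0 := by
  have hp : (p : ℂ) ≠ 0 := Nat.cast_ne_zero.2 (NeZero.ne p)
  simp_rw [← Finset.mul_sum, dotProduct_comm h, sum_stdAddChar_dotProduct]
  simp [unif, hp]

lemma sq_two_mul_tvDist_le (hμ0 : ∀ x, 0 ≤ μ x) (hμ1 : HasSum μ 1) (n : ℕ) :
    (2 * tvDist A μ p n) ^ 2 ≤
      ∑ h ∈ ({0}ᶜ : Finset (Fin k → ZMod p)), ‖modFourier p (chainDist A μ n) h‖ ^ 2 := by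
  have hfourier (h : Fin k → ZMod p) :
      ∑ x, ((chainDistMod A μ p n x - unif k p : ℝ) : ℂ) * ZMod.stdAddChar (h ⬝ᵥ x) =
        modFourier p (chainDist A μ n) h - if h = 0 then 1 else 0 := by
    simp only [Complex.ofReal_sub, sub_mul, Finset.sum_sub_distrib]
    rw [sum_chainDistMod_mul_stdAddChar hμ0 hμ1, sum_unif_mul_stdAddChar]
  calc (2 * tvDist A μ p n) ^ 2
      = (∑ x : Fin k → ZMod p, |chainDistMod A μ p n x - unif k p|) ^ 2 := by
        rw [tvDist, tsum_fintype]
        ring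
    _ ≤ (p : ℝ) ^ k * ∑ x : Fin k → ZMod p, |chainDistMod A μ p n x - unif k p| ^ 2 := by
        refine sq_sum_le_card_mul_sum_sq.trans_eq ?_
        simp
    _ = ∑ h : Fin k → ZMod p,
          ‖modFourier p (chainDist A μ n) h - if h = 0 then 1 else 0‖ ^ 2 := by
        simp_rw [← hfourier, sum_norm_sq_sum_mul_stdAddChar, Complex.norm_real, Real.norm_eq_abs,
          Fintype.card_fin]
    _ = ∑ h ∈ ({0}ᶜ : Finset (Fin k → ZMod p)), ‖modFourier p (chainDist A μ n) h‖ ^ 2 := by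
        rw [Fintype.sum_eq_add_sum_compl 0, if_pos rfl,
          modFourier_zero_right (hasSum_chainDist hμ0 hμ1 n), sub_self, norm_zero, sq, zero_mul,
          zero_add]
        refine Finset.sum_congr rfl fun h hh => ?_
        rw [if_neg (by simpa using hh), sub_zero]

end VariationDistance

section Blocks

lemma sum_range_div_sum_range_le {F : ℕ → ℝ} (hF : ∀ t, 0 ≤ F t) (L n : ℕ) :
    ∑ s ∈ Finset.range (n / L), ∑ m ∈ Finset.range L, F (L * s + m) ≤
      ∑ t ∈ Finset.range n, F t := by
  have hblocks (q : ℕ) : ∑ s ∈ Finset.range q, ∑ m ∈ Finset.range L, F (L * s + m) =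
      ∑ t ∈ Finset.range (L * q), F t := by
    induction q with
    | zero => simp
    | succ q ih => rw [Finset.sum_range_succ, ih, mul_add, mul_one, Finset.sum_range_add]
  rw [hblocks]
  exact Finset.sum_le_sum_of_subset_of_nonneg (Finset.range_subset_range.2 (Nat.mul_div_le n L))
    fun t _ _ => hF t

lemma dispersion_le_sum_range {ι κ : Type*} [Fintype ι] [DecidableEq ι] [Fintype κ] {p : ℕ}
    [NeZero p] (A : Matrix ι ι ℤ) {x y : κ → ι → ℤ} {m : κ → ℕ} {L : ℕ} (hm : ∀ j, m j < L)
    (hy : ∀ j, y j = A ^ m j *ᵥ x j) (h : ι → ZMod p) :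
    dispersion p y h ≤ ∑ i ∈ Finset.range L, dispersion p x ((freqMap p A ^ i) h) := by
  simp only [dispersion]
  rw [Finset.sum_comm]
  refine Finset.sum_le_sum fun j _ => ?_
  rw [hy j, ← phase_freqMap, freqMap_pow]
  exact Finset.single_le_sum (f := fun i => ‖phase p (x j) ((freqMap p A ^ i) h)‖ ^ 2)
    (fun i _ => sq_nonneg _) (Finset.mem_range.2 (hm j))

lemma exists_norm_modFourier_chainDist_le {k : ℕ} [Nonempty (Fin k)]
    (A : Matrix (Fin k) (Fin k) ℤ) {μ : (Fin k → ℤ) → ℝ} (hμ0 : ∀ x, 0 ≤ μ x) (hμ1 : HasSum μ 1)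
    {y : Fin k → Fin k → ℤ} (hy : ∀ j, y j ∈ VdSet A μ) {L : ℕ} (hL : minpolyDeg A ≤ L) :
    ∃ c : ℝ, 0 < c ∧ ∀ (p : ℕ) [NeZero p] (n : ℕ) (h : Fin k → ZMod p),
      ‖modFourier p (chainDist A μ n) h‖ ≤
        Real.exp (-(c * ∑ s ∈ Finset.range (n / L),
          dispersion p y (((freqMap p A ^ L) ^ s) h))) := by
  have hy' (j : Fin k) : ∃ (a b : Fin k → ℤ) (m : ℕ), μ a ≠ 0 ∧ μ b ≠ 0 ∧ m < L ∧
      y j = A ^ m *ᵥ (a - b) := by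
    obtain ⟨x, ⟨a, b, ha, hb, rfl⟩, m, hm, hj⟩ := hy j
    exact ⟨a, b, m, ha, hb, by omega, hj⟩
  choose a b m ha hb hm hyj using hy'
  obtain ⟨c, hc, hμ⟩ := exists_norm_modFourier_le_exp_dispersion hμ0 hμ1 ha hb
  refine ⟨c, hc, fun p _ n h => ?_⟩
  rw [modFourier_chainDist hμ0 hμ1, norm_prod]
  refine (Finset.prod_le_prod (fun _ _ => norm_nonneg _) (fun t _ => hμ p _)).trans ?_
  rw [← Real.exp_sum, Finset.sum_neg_distrib, ← Finset.mul_sum]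
  gcongr
  refine le_trans ?_ (sum_range_div_sum_range_le (fun t => dispersion_nonneg p (a - b) _) L n)
  refine Finset.sum_le_sum fun s _ => (dispersion_le_sum_range A hm hyj _).trans_eq ?_
  simp only [← Module.End.mul_apply, ← pow_mul, ← pow_add, add_comm]
  rfl

end Blocks

section TwoKinds

open Polynomial

variable {k p : ℕ} {y : Fin k → Fin k → ℤ}

lemma freqMap_colMat_apply (h : Fin k → ZMod p) (j : Fin k) :
    freqMap p (colMat y) h j = h ⬝ᵥ redVec p (y j) := by
  have hcol : colMat y *ᵥ Pi.single j 1 = y j := by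
    rw [mulVec_single_one]
    rfl
  have hsingle : redVec p (Pi.single j 1 : Fin k → ℤ) = Pi.single j 1 := by
    ext i
    simp [redVec, Pi.single_apply]
  rw [← dotProduct_single_one (freqMap p (colMat y) h) j, ← hsingle, freqMap_dotProduct_redVec,
    hcol]

variable [NeZero p]

lemma exists_one_le_two_pow_mul_norm_phase (hy : Int.gcd (colMat y).det p = 1)
    {u : Fin k → ZMod p} (hu : u ≠ 0) : ∃ j, 1 ≤ 2 ^ p * ‖phase p (y j) u‖ := by
  obtain ⟨j, hj⟩ := Function.ne_iff.1 ((map_ne_zero_iff _ (freqMap_injective hy)).2 hu)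
  rw [freqMap_colMat_apply] at hj
  have hp : (0 : ℝ) < p := Nat.cast_pos.2 (NeZero.pos p)
  refine ⟨j, ?_⟩
  calc (1 : ℝ) = p * (p : ℝ)⁻¹ := (mul_inv_cancel₀ hp.ne').symm
    _ ≤ 2 ^ p * ‖phase p (y j) u‖ := by
      gcongr
      · exact_mod_cast Nat.lt_two_pow_self.le
      · exact inv_le_norm_toAddCircle hj

variable {T : Module.End (ZMod p) (Fin k → ZMod p)} {ms : Multiset ℕ}

lemma escapeGap_sq_le_sum_dispersion (hy : Int.gcd (colMat y).det p = 1) (hms : ∀ m ∈ ms, 2 ≤ m)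
    (hp : ms.card + 1 < p)
    (hT : aeval T ((X - 1) * (ms.map fun m : ℕ => (X - (m : ℤ[X]))).prod) = 0)
    {h : Fin k → ZMod p} (hh : T h ≠ h) :
    escapeGap (1 ::ₘ ms) ^ 2 ≤ ∑ i ∈ Finset.range (2 * p), dispersion p y ((T ^ i) h) := by
  obtain ⟨s, hs, j, hj⟩ := exists_escapeGap_le_norm_pow_of_apply_ne
    (φ := fun j => phase p (y j)) (fun u => exists_one_le_two_pow_mul_norm_phase hy) hms hT hh
  calc escapeGap (1 ::ₘ ms) ^ 2
      ≤ ‖phase p (y j) ((T ^ s) h)‖ ^ 2 := pow_le_pow_left₀ (escapeGap_pos _).le hj 2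
    _ ≤ dispersion p y ((T ^ s) h) :=
      Finset.single_le_sum (f := fun j => ‖phase p (y j) ((T ^ s) h)‖ ^ 2)
        (fun _ _ => sq_nonneg _) (Finset.mem_univ j)
    _ ≤ ∑ i ∈ Finset.range (2 * p), dispersion p y ((T ^ i) h) :=
      Finset.single_le_sum (f := fun i => dispersion p y ((T ^ i) h))
        (fun _ _ => dispersion_nonneg p y _) (Finset.mem_range.2 (by omega))

lemma div_mul_escapeGap_sq_le_sum_dispersion (hy : Int.gcd (colMat y).det p = 1)
    (hms : ∀ m ∈ ms, 2 ≤ m) (hp : ms.card + 1 < p) (hTinj : Function.Injective T)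
    (hT : aeval T ((X - 1) * (ms.map fun m : ℕ => (X - (m : ℤ[X]))).prod) = 0)
    {h : Fin k → ZMod p} (hh : T h ≠ h) (q : ℕ) :
    ((q / (2 * p) : ℕ) : ℝ) * escapeGap (1 ::ₘ ms) ^ 2 ≤
      ∑ s ∈ Finset.range q, dispersion p y ((T ^ s) h) := by
  have hmoved (s : ℕ) : T ((T ^ (2 * p * s)) h) ≠ (T ^ (2 * p * s)) h := by
    rw [← Module.End.mul_apply, ← pow_succ', pow_succ, Module.End.mul_apply]
    refine fun hfix => hh (?_ : T h = h)
    rw [Module.End.pow_apply, Module.End.pow_apply] at hfix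
    exact hTinj.iterate _ hfix
  calc ((q / (2 * p) : ℕ) : ℝ) * escapeGap (1 ::ₘ ms) ^ 2
      = ∑ _s ∈ Finset.range (q / (2 * p)), escapeGap (1 ::ₘ ms) ^ 2 := by
        rw [Finset.sum_const, Finset.card_range, nsmul_eq_mul]
    _ ≤ ∑ s ∈ Finset.range (q / (2 * p)), ∑ i ∈ Finset.range (2 * p),
          dispersion p y ((T ^ (2 * p * s + i)) h) := by
        refine Finset.sum_le_sum fun s _ => ?_
        simp only [add_comm (2 * p * s), pow_add T _ (2 * p * s), Module.End.mul_apply]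
        exact escapeGap_sq_le_sum_dispersion hy hms hp hT (hmoved s)
    _ ≤ ∑ s ∈ Finset.range q, dispersion p y ((T ^ s) h) :=
        sum_range_div_sum_range_le (F := fun t => dispersion p y ((T ^ t) h))
          (fun _ => dispersion_nonneg p y _) (2 * p) q

lemma exp_neg_sum_dispersion_le (hy : Int.gcd (colMat y).det p = 1)
    (hms : ∀ m ∈ ms, 2 ≤ m) (hp : ms.card + 1 < p) (hTinj : Function.Injective T)
    (hT : aeval T ((X - 1) * (ms.map fun m : ℕ => (X - (m : ℤ[X]))).prod) = 0)
    {c : ℝ} (hc : 0 ≤ c) (h : Fin k → ZMod p) (q : ℕ) :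
    Real.exp (-(c * ∑ s ∈ Finset.range q, dispersion p y ((T ^ s) h))) ≤
      Real.exp (-(c * (q * dispersion p y h))) +
        Real.exp (-(c * ((q / (2 * p) : ℕ) * escapeGap (1 ::ₘ ms) ^ 2))) := by
  by_cases hh : T h = h
  · refine le_add_of_le_of_nonneg (le_of_eq ?_) (Real.exp_nonneg _)
    have hfix (s : ℕ) : (T ^ s) h = h := by
      rw [Module.End.pow_apply]
      exact Function.iterate_fixed hh s
    simp only [hfix, Finset.sum_const, Finset.card_range, nsmul_eq_mul]
  · refine le_add_of_nonneg_of_le (Real.exp_nonneg _) ?_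
    gcongr
    exact div_mul_escapeGap_sq_le_sum_dispersion hy hms hp hTinj hT hh q

end TwoKinds

section GaussianSums

variable {p : ℕ} [NeZero p]

lemma summable_exp_neg_natAbs : Summable fun v : ℤ => Real.exp (-(v.natAbs : ℝ)) :=
  .of_nat_of_neg (by simpa using Real.summable_exp_neg_nat)
    (by simpa using Real.summable_exp_neg_nat)

/-- The constant `∑_{v ∈ ℤ} e^{-|v|}`, which bounds the Gaussian sums over `ZMod p` uniformly
in `p`. -/
def intExpSum : ℝ := ∑' v : ℤ, Real.exp (-(v.natAbs : ℝ))

lemma intExpSum_nonneg : 0 ≤ intExpSum := tsum_nonneg fun _ => (Real.exp_pos _).le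

lemma sum_exp_neg_mul_sq_le_intExpSum {t : ℝ} (ht : 1 ≤ t) :
    ∑ g : ZMod p, Real.exp (-(t * (p * ‖ZMod.toAddCircle g‖) ^ 2)) ≤ intExpSum := by
  have hp : (p : ℝ) ≠ 0 := Nat.cast_ne_zero.2 (NeZero.ne p)
  calc ∑ g : ZMod p, Real.exp (-(t * (p * ‖ZMod.toAddCircle g‖) ^ 2))
      ≤ ∑ g : ZMod p, Real.exp (-(g.valMinAbs.natAbs : ℝ)) := by
        gcongr with g
        rw [norm_toAddCircle, mul_div_cancel₀ _ hp]
        have hself : (g.valMinAbs.natAbs : ℝ) ≤ (g.valMinAbs.natAbs : ℝ) ^ 2 := by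
          exact_mod_cast Nat.le_self_pow two_ne_zero _
        nlinarith [sq_nonneg (g.valMinAbs.natAbs : ℝ)]
    _ = ∑' g : ZMod p, Real.exp (-(g.valMinAbs.natAbs : ℝ)) := (tsum_fintype _).symm
    _ ≤ intExpSum := tsum_comp_le_tsum_of_inj summable_exp_neg_natAbs
        (fun _ => (Real.exp_pos _).le) ZMod.injective_valMinAbs

variable {ι : Type*} [Fintype ι]

lemma exp_neg_two_mul_sum_le {t : ℝ} (ht : 0 ≤ t) {g : ι → ZMod p} (hg : g ≠ 0) :
    Real.exp (-(2 * t * ∑ j, (p * ‖ZMod.toAddCircle (g j)‖) ^ 2)) ≤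
      Real.exp (-t) * ∏ j, Real.exp (-(t * (p * ‖ZMod.toAddCircle (g j)‖) ^ 2)) := by
  obtain ⟨i, hi⟩ := Function.ne_iff.1 hg
  have hp : (0 : ℝ) < p := Nat.cast_pos.2 (NeZero.pos p)
  have hone : 1 ≤ ∑ j, (p * ‖ZMod.toAddCircle (g j)‖) ^ 2 := by
    refine le_trans (one_le_pow₀ ?_) (Finset.single_le_sum
      (f := fun j => (p * ‖ZMod.toAddCircle (g j)‖) ^ 2) (fun _ _ => sq_nonneg _)
      (Finset.mem_univ i))
    rw [← inv_mul_le_iff₀ hp, mul_one]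
    exact inv_le_norm_toAddCircle hi
  rw [← Real.exp_sum, ← Real.exp_add, Finset.sum_neg_distrib, ← Finset.mul_sum]
  gcongr
  nlinarith

lemma sum_exp_neg_two_mul_sum_le [DecidableEq ι] {t : ℝ} (ht : 1 ≤ t) :
    ∑ g ∈ ({0}ᶜ : Finset (ι → ZMod p)),
      Real.exp (-(2 * t * ∑ j, (p * ‖ZMod.toAddCircle (g j)‖) ^ 2)) ≤
        intExpSum ^ Fintype.card ι * Real.exp (-t) := by
  calc ∑ g ∈ ({0}ᶜ : Finset (ι → ZMod p)),
        Real.exp (-(2 * t * ∑ j, (p * ‖ZMod.toAddCircle (g j)‖) ^ 2))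
      ≤ ∑ g ∈ ({0}ᶜ : Finset (ι → ZMod p)),
          Real.exp (-t) * ∏ j, Real.exp (-(t * (p * ‖ZMod.toAddCircle (g j)‖) ^ 2)) :=
        Finset.sum_le_sum fun g hg => exp_neg_two_mul_sum_le (by linarith) (by simpa using hg)
    _ ≤ ∑ g : ι → ZMod p,
          Real.exp (-t) * ∏ j, Real.exp (-(t * (p * ‖ZMod.toAddCircle (g j)‖) ^ 2)) :=
        Finset.sum_le_univ_sum_of_nonneg fun g => by positivity
    _ = (∑ g : ZMod p, Real.exp (-(t * (p * ‖ZMod.toAddCircle g‖) ^ 2))) ^ Fintype.card ι *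
          Real.exp (-t) := by
        rw [← Finset.mul_sum, mul_comm, ← Finset.card_univ, ← Finset.prod_const,
          Finset.prod_univ_sum, Fintype.piFinset_univ]
    _ ≤ intExpSum ^ Fintype.card ι * Real.exp (-t) := by
        gcongr
        exact sum_exp_neg_mul_sq_le_intExpSum ht

lemma sum_exp_neg_dispersion_le {k : ℕ} {y : Fin k → Fin k → ℤ}
    (hy : Int.gcd (colMat y).det p = 1) {t : ℝ} (ht : 1 ≤ t) :
    ∑ h ∈ ({0}ᶜ : Finset (Fin k → ZMod p)), Real.exp (-(2 * t * (p ^ 2 * dispersion p y h))) ≤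
      intExpSum ^ k * Real.exp (-t) := by
  have hinj := freqMap_injective hy
  refine le_of_eq_of_le ?_ ((sum_exp_neg_two_mul_sum_le (ι := Fin k) (p := p) ht).trans_eq
    (by rw [Fintype.card_fin]))
  refine Finset.sum_bijective (freqMap p (colMat y)) (Finite.injective_iff_bijective.1 hinj)
    (fun h => ?_) fun h _ => ?_
  · simp [map_eq_zero_iff _ hinj]
  · simp only [freqMap_colMat_apply, mul_pow, ← Finset.mul_sum]
    rfl

end GaussianSums

section Decay

lemma div_two_mul_le_natCast_div {w x : ℕ} (hw : 0 < w) (hwx : w ≤ x) :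
    (x : ℝ) / (2 * w) ≤ (x / w : ℕ) := by
  have hlt : x < w * (x / w + 1) := Nat.lt_mul_div_succ x hw
  have hone : 1 ≤ x / w := (Nat.one_le_div_iff hw).2 hwx
  have hle : x ≤ x / w * (2 * w) := by nlinarith
  rw [div_le_iff₀ (by positivity)]
  exact_mod_cast hle

lemma pow_mul_exp_neg_le {k p : ℕ} (hp : 1 ≤ p) {b : ℝ} (hb : k ≤ b) :
    (p : ℝ) ^ k * Real.exp (-(2 * (b * p))) ≤ Real.exp (-b) := by
  have hp1 : (1 : ℝ) ≤ p := Nat.one_le_cast.2 hp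
  have hpow : (p : ℝ) ^ k ≤ Real.exp (k * p) := by
    rw [Real.exp_nat_mul]
    gcongr
    linarith [Real.add_one_le_exp (p : ℝ)]
  calc (p : ℝ) ^ k * Real.exp (-(2 * (b * p)))
      ≤ Real.exp (k * p) * Real.exp (-(2 * (b * p))) := by gcongr
    _ = Real.exp (k * p - 2 * (b * p)) := by rw [← Real.exp_add, sub_eq_add_neg]
    _ ≤ Real.exp (-b) := by
        gcongr
        nlinarith [k.cast_nonneg (α := ℝ)]

lemma mul_exp_neg_add_exp_neg_le {S b : ℝ} (hS : 0 ≤ S) (hb : Real.log (1 + S) ≤ b) :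
    S * Real.exp (-(2 * b)) + Real.exp (-(2 * b)) ≤ Real.exp (-b) := by
  have hexp : 1 + S ≤ Real.exp b := (Real.log_le_iff_le_exp (by linarith)).1 hb
  calc S * Real.exp (-(2 * b)) + Real.exp (-(2 * b)) = (1 + S) * Real.exp (-(2 * b)) := by ring
    _ ≤ Real.exp b * Real.exp (-(2 * b)) := by gcongr
    _ = Real.exp (-b) := by
        rw [← Real.exp_add]
        ring_nf

lemma mul_exp_neg_add_pow_mul_exp_neg_le {k p n L : ℕ} (hp : 1 ≤ p) (hL : 0 < L)
    (hn : 2 * L * p ≤ n) {S c ε a : ℝ} (hS : 0 ≤ S) (hc : 0 ≤ c) (hε : 0 ≤ ε)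
    (hγ : 4 * a ≤ c / (2 * L)) (hβ : 4 * a ≤ c * ε / (4 * L))
    (hk : k ≤ c * ε / (4 * L) * (n / (p : ℝ) ^ 2))
    (hlog : Real.log (1 + S) ≤ 2 * a * (n / (p : ℝ) ^ 2)) :
    S * Real.exp (-(c * (n / L : ℕ) / (p : ℝ) ^ 2)) +
      (p : ℝ) ^ k * Real.exp (-(2 * c * ((n / L / (2 * p) : ℕ) * ε))) ≤
        Real.exp (-(a * n) / (p : ℝ) ^ 2) ^ 2 := by
  set x : ℝ := n / (p : ℝ) ^ 2 with hx
  have hx0 : 0 ≤ x := by positivity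
  have hfixed : 2 * (2 * a * x) ≤ c * (n / L : ℕ) / (p : ℝ) ^ 2 :=
    calc 2 * (2 * a * x) = 4 * a * x := by ring
      _ ≤ c / (2 * L) * x := by gcongr
      _ = c * (n / (2 * L)) / (p : ℝ) ^ 2 := by
          rw [hx]
          field_simp
      _ ≤ c * (n / L : ℕ) / (p : ℝ) ^ 2 := by
          gcongr
          exact div_two_mul_le_natCast_div hL (by nlinarith)
  have hmoved : 2 * (c * ε / (4 * L) * x * p) ≤ 2 * c * ((n / L / (2 * p) : ℕ) * ε) :=
    calc 2 * (c * ε / (4 * L) * x * p) = 2 * c * (n / (2 * (L * (2 * p) : ℕ)) * ε) := by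
          rw [hx]
          push_cast
          field_simp
          ring
      _ ≤ 2 * c * ((n / L / (2 * p) : ℕ) * ε) := by
          rw [Nat.div_div_eq_div_mul]
          gcongr
          exact div_two_mul_le_natCast_div (by positivity) (by linarith)
  calc S * Real.exp (-(c * (n / L : ℕ) / (p : ℝ) ^ 2)) +
        (p : ℝ) ^ k * Real.exp (-(2 * c * ((n / L / (2 * p) : ℕ) * ε)))
      ≤ S * Real.exp (-(2 * (2 * a * x))) +
          (p : ℝ) ^ k * Real.exp (-(2 * (c * ε / (4 * L) * x * p))) := by gcongr
    _ ≤ S * Real.exp (-(2 * (2 * a * x))) + Real.exp (-(2 * (2 * a * x))) := by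
        gcongr
        refine (pow_mul_exp_neg_le hp hk).trans (Real.exp_le_exp.2 ?_)
        linarith [mul_le_mul_of_nonneg_right hβ hx0]
    _ ≤ Real.exp (-(2 * a * x)) := mul_exp_neg_add_exp_neg_le hS hlog
    _ = Real.exp (-(a * n) / (p : ℝ) ^ 2) ^ 2 := by
        rw [← Real.exp_nat_mul, hx]
        push_cast
        ring_nf

lemma exists_mul_exp_neg_add_pow_mul_exp_neg_le (k : ℕ) {L : ℕ} (hL : 0 < L) {S c ε : ℝ}
    (hS : 0 ≤ S) (hc : 0 < c) (hε : 0 < ε) :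
    ∃ a b : ℝ, 0 < a ∧ 0 < b ∧ ∀ p n : ℕ, 1 ≤ p → b * (p : ℝ) ^ 2 ≤ n →
      1 ≤ c * (n / L : ℕ) / (p : ℝ) ^ 2 ∧
      S * Real.exp (-(c * (n / L : ℕ) / (p : ℝ) ^ 2)) +
        (p : ℝ) ^ k * Real.exp (-(2 * c * ((n / L / (2 * p) : ℕ) * ε))) ≤
          Real.exp (-(a * n) / (p : ℝ) ^ 2) ^ 2 := by
  have hL0 : (0 : ℝ) < L := Nat.cast_pos.2 hL
  set β := c * ε / (4 * L)
  set γ := c / (2 * L) with hγ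
  set a := min β γ / 4 with ha
  have hβ0 : 0 < β := by positivity
  have hγ0 : 0 < γ := by positivity
  have ha0 : 0 < a := div_pos (lt_min hβ0 hγ0) four_pos
  have hlog0 : 0 ≤ Real.log (1 + S) := Real.log_nonneg (by linarith)
  refine ⟨a, k / β + 1 / γ + Real.log (1 + S) / (2 * a) + 2 * L, ha0, by positivity,
    fun p n hp hn => ?_⟩
  have hp1 : (1 : ℝ) ≤ p := Nat.one_le_cast.2 hp
  rw [← le_div_iff₀ (by positivity)] at hn
  have hk0 : 0 ≤ k / β := by positivity
  have hγ1 : 0 ≤ 1 / γ := by positivity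
  have hlog1 : 0 ≤ Real.log (1 + S) / (2 * a) := by positivity
  have hLn : 2 * L * p ≤ n := by
    have : 2 * (L : ℝ) ≤ n / (p : ℝ) ^ 2 := by linarith
    rw [le_div_iff₀ (by positivity)] at this
    exact_mod_cast (show 2 * (L : ℝ) * p ≤ n by nlinarith)
  refine ⟨?_, mul_exp_neg_add_pow_mul_exp_neg_le hp hL hLn hS hc.le hε.le ?_ ?_ ?_ ?_⟩
  · calc (1 : ℝ) ≤ γ * (n / (p : ℝ) ^ 2) := (div_le_iff₀' hγ0).1 (by linarith)
      _ = c * (n / (2 * L)) / (p : ℝ) ^ 2 := by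
          rw [hγ]
          field_simp
      _ ≤ c * (n / L : ℕ) / (p : ℝ) ^ 2 := by
          gcongr
          exact div_two_mul_le_natCast_div hL (by nlinarith)
  · linarith [min_le_right β γ]
  · linarith [min_le_left β γ]
  · exact (div_le_iff₀' hβ0).1 (by linarith)
  · exact (div_le_iff₀' (by positivity)).1 (by linarith)

end Decay

section Convergence

open Polynomial

variable {k : ℕ} {A : Matrix (Fin k) (Fin k) ℤ} {μ : (Fin k → ℤ) → ℝ} {y : Fin k → Fin k → ℤ}
  {L : ℕ} {ms : Multiset ℕ}

lemma sq_two_mul_tvDist_le_add {p : ℕ} [NeZero p] (hA : Int.gcd A.det p = 1)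
    (hy : Int.gcd (colMat y).det p = 1) (hms : ∀ m ∈ ms, 2 ≤ m)
    (hann : aeval (A ^ L) ((X - 1) * (ms.map fun m : ℕ => (X - (m : ℤ[X]))).prod) = 0)
    (hp : ms.card + 1 < p) (hμ0 : ∀ x, 0 ≤ μ x) (hμ1 : HasSum μ 1) {n : ℕ} {c : ℝ} (hc : 0 ≤ c)
    (hF : ∀ h, ‖modFourier p (chainDist A μ n) h‖ ≤
      Real.exp (-(c * ∑ s ∈ Finset.range (n / L), dispersion p y (((freqMap p A ^ L) ^ s) h))))
    (hn : 1 ≤ c * (n / L : ℕ) / (p : ℝ) ^ 2) :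
    (2 * tvDist A μ p n) ^ 2 ≤
      intExpSum ^ k * Real.exp (-(c * (n / L : ℕ) / (p : ℝ) ^ 2)) +
        (p : ℝ) ^ k * Real.exp (-(2 * c * ((n / L / (2 * p) : ℕ) * escapeGap (1 ::ₘ ms) ^ 2))) := by
  have hp0 : (p : ℝ) ≠ 0 := Nat.cast_ne_zero.2 (NeZero.ne p)
  have hTinj : Function.Injective (freqMap p A ^ L) := by
    rw [Module.End.coe_pow]
    exact (freqMap_injective hA).iterate L
  have hT : aeval (freqMap p A ^ L)
      ((X - 1) * (ms.map fun m : ℕ => (X - (m : ℤ[X]))).prod) = 0 := by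
    rw [← freqMap_pow, aeval_freqMap, hann]
    ext
    simp [freqMap]
  have hcard : ((({0}ᶜ : Finset (Fin k → ZMod p)).card : ℕ) : ℝ) ≤ (p : ℝ) ^ k := by
    exact_mod_cast (Finset.card_le_univ _).trans_eq (by simp)
  calc (2 * tvDist A μ p n) ^ 2
      ≤ ∑ h ∈ ({0}ᶜ : Finset (Fin k → ZMod p)), ‖modFourier p (chainDist A μ n) h‖ ^ 2 :=
        sq_two_mul_tvDist_le hμ0 hμ1 n
    _ ≤ ∑ h ∈ ({0}ᶜ : Finset (Fin k → ZMod p)),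
          Real.exp (-(2 * c * ∑ s ∈ Finset.range (n / L),
            dispersion p y (((freqMap p A ^ L) ^ s) h))) := by
        gcongr with h
        refine (pow_le_pow_left₀ (norm_nonneg _) (hF h) 2).trans_eq ?_
        rw [← Real.exp_nat_mul]
        push_cast
        ring_nf
    _ ≤ ∑ h ∈ ({0}ᶜ : Finset (Fin k → ZMod p)),
          (Real.exp (-(2 * c * ((n / L : ℕ) * dispersion p y h))) +
            Real.exp (-(2 * c * ((n / L / (2 * p) : ℕ) * escapeGap (1 ::ₘ ms) ^ 2)))) :=
        Finset.sum_le_sum fun h _ =>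
          exp_neg_sum_dispersion_le hy hms hp hTinj hT (by positivity) h (n / L)
    _ ≤ intExpSum ^ k * Real.exp (-(c * (n / L : ℕ) / (p : ℝ) ^ 2)) +
        (p : ℝ) ^ k * Real.exp (-(2 * c * ((n / L / (2 * p) : ℕ) * escapeGap (1 ::ₘ ms) ^ 2))) := by
        rw [Finset.sum_add_distrib, Finset.sum_const, nsmul_eq_mul]
        gcongr
        refine le_of_eq_of_le (Finset.sum_congr rfl fun h _ => ?_)
          (sum_exp_neg_dispersion_le hy hn)
        field_simp

lemma exists_tvDist_le_of_aeval_pow_eq_zero [Nonempty (Fin k)] (hL : 0 < L)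
    (hAL : minpolyDeg A ≤ L) (hms : ∀ m ∈ ms, 2 ≤ m)
    (hann : aeval (A ^ L) ((X - 1) * (ms.map fun m : ℕ => (X - (m : ℤ[X]))).prod) = 0)
    (hμ0 : ∀ x, 0 ≤ μ x) (hμ1 : HasSum μ 1) (hy : ∀ j, y j ∈ VdSet A μ) :
    ∃ a b : ℝ, 0 < a ∧ 0 < b ∧ ∀ p : ℕ, ms.card + 1 < p →
      Int.gcd A.det p = 1 → Int.gcd (colMat y).det p = 1 → ∀ n : ℕ, b * (p : ℝ) ^ 2 ≤ n →
        2 * tvDist A μ p n ≤ Real.exp (-(a * n) / (p : ℝ) ^ 2) := by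
  obtain ⟨c, hc, hF⟩ := exists_norm_modFourier_chainDist_le A hμ0 hμ1 hy hAL
  obtain ⟨a, b, ha, hb, hdecay⟩ := exists_mul_exp_neg_add_pow_mul_exp_neg_le k hL
    (pow_nonneg intExpSum_nonneg k) hc (pow_pos (escapeGap_pos (1 ::ₘ ms)) 2)
  refine ⟨a, b, ha, hb, fun p hp hA hB n hn => ?_⟩
  have : NeZero p := ⟨by omega⟩
  obtain ⟨hone, hexp⟩ := hdecay p n (by omega) hn
  refine le_of_sq_le_sq ?_ (Real.exp_nonneg _)
  exact (sq_two_mul_tvDist_le_add hA hB hms hann hp hμ0 hμ1 hc.le (hF p n) hone).trans hexp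

end Convergence

section Spectrum

open Polynomial

lemma exists_forall_pow_eq_natCast {d : ℕ} {lam : ℕ → ℂ}
    (hlam : ∀ i < d, ∃ l : ℕ, 0 < l ∧ ∃ m : ℕ, 0 < m ∧ lam i ^ l = m) :
    ∃ L : ℕ, d ≤ L ∧ 0 < L ∧ ∃ e : ℕ → ℕ, ∀ i < d, 0 < e i ∧ lam i ^ L = e i := by
  choose! l hl m hm hlm using hlam
  set q := ∏ i ∈ Finset.range d, l i
  have hq0 : 0 < q := Finset.prod_pos fun i hi => hl i (Finset.mem_range.1 hi)
  refine ⟨(d + 1) * q, by nlinarith, by positivity, fun i => m i ^ ((d + 1) * q / l i),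
    fun i hi => ⟨pow_pos (hm i hi) _, ?_⟩⟩
  have hdvd : l i ∣ (d + 1) * q :=
    (Finset.dvd_prod_of_mem l (Finset.mem_range.2 hi)).mul_left _
  rw [Nat.cast_pow, ← hlm i hi, ← pow_mul, Nat.mul_div_cancel' hdvd]

lemma prod_X_sub_C_dvd_comp_X_pow {ι R : Type*} [CommRing R] (s : Finset ι) {lam e : ι → R}
    {L : ℕ} (he : ∀ i ∈ s, lam i ^ L = e i) :
    ∏ i ∈ s, (X - C (lam i)) ∣ (∏ i ∈ s, (X - C (e i))).comp (X ^ L) := by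
  rw [prod_comp]
  refine Finset.prod_dvd_prod_of_dvd _ _ fun i hi => ?_
  rw [dvd_iff_isRoot, IsRoot.def, eval_comp]
  simp [he i hi]

lemma aeval_map_intCast_eq_zero_iff {k : ℕ} {R : Type*} [CommRing R] [CharZero R]
    (A : Matrix (Fin k) (Fin k) ℤ) (P : ℤ[X]) :
    aeval (A.map (Int.cast : ℤ → R)) P = 0 ↔ aeval A P = 0 := by
  have hmap : aeval (A.map (Int.cast : ℤ → R)) P =
      (Int.castRingHom R).mapMatrix (aeval A P) :=
    aeval_algHom_apply ((Int.castRingHom R).mapMatrix (m := Fin k)).toIntAlgHom A P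
  rw [hmap, map_eq_zero_iff (Int.castRingHom R).mapMatrix
    (Matrix.map_injective Int.cast_injective)]

lemma map_intCast_map_algebraMap {k : ℕ} (A : Matrix (Fin k) (Fin k) ℤ) :
    (A.map (Int.cast : ℤ → ℚ)).map (algebraMap ℚ ℂ) = A.map (Int.cast : ℤ → ℂ) := by
  ext
  simp

lemma aeval_map_minpoly {k : ℕ} (A : Matrix (Fin k) (Fin k) ℚ) :
    aeval (A.map (algebraMap ℚ ℂ)) (minpoly ℚ A) = 0 := by
  have hmap := aeval_algHom_apply ((Algebra.ofId ℚ ℂ).mapMatrix (m := Fin k)) A (minpoly ℚ A)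
  rwa [minpoly.aeval, map_zero] at hmap

section MinimalPolynomial

variable {k : ℕ} {A : Matrix (Fin k) (Fin k) ℤ} {lam : ℕ → ℂ}

lemma isRoot_charpoly_of_map_minpoly_eq_prod
    (hmin : (minpoly ℚ (A.map (Int.cast : ℤ → ℚ))).map (algebraMap ℚ ℂ) =
      ∏ i ∈ Finset.range (minpolyDeg A), (X - C (lam i)))
    {i : ℕ} (hi : i < minpolyDeg A) : (A.map (Int.cast : ℤ → ℂ)).charpoly.IsRoot (lam i) := by
  have hdvd : (minpoly ℚ (A.map (Int.cast : ℤ → ℚ))).map (algebraMap ℚ ℂ) ∣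
      (A.map (Int.cast : ℤ → ℂ)).charpoly := by
    rw [← map_intCast_map_algebraMap, charpoly_map]
    exact Polynomial.map_dvd _ (minpoly_dvd_charpoly _)
  refine IsRoot.dvd ?_ hdvd
  rw [hmin, IsRoot.def, eval_prod]
  exact Finset.prod_eq_zero (Finset.mem_range.2 hi) (by simp)

lemma aeval_pow_prod_eq_zero
    (hmin : (minpoly ℚ (A.map (Int.cast : ℤ → ℚ))).map (algebraMap ℚ ℂ) =
      ∏ i ∈ Finset.range (minpolyDeg A), (X - C (lam i)))
    {L : ℕ} {e : ℕ → ℕ} (he : ∀ i < minpolyDeg A, lam i ^ L = e i) :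
    aeval (A ^ L) (∏ i ∈ Finset.range (minpolyDeg A), (X - (e i : ℤ[X]))) = 0 := by
  have hdvd : (minpoly ℚ (A.map (Int.cast : ℤ → ℚ))).map (algebraMap ℚ ℂ) ∣
      ((∏ i ∈ Finset.range (minpolyDeg A), (X - (e i : ℤ[X]))).comp (X ^ L)).map
        (algebraMap ℤ ℂ) := by
    rw [hmin, Polynomial.map_comp, Polynomial.map_prod]
    simpa using prod_X_sub_C_dvd_comp_X_pow (e := fun i => (e i : ℂ)) _
      fun i hi => he i (Finset.mem_range.1 hi)
  have hpow : aeval A ((X : ℤ[X]) ^ L) = A ^ L := by simp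
  rw [← hpow, ← aeval_comp, ← aeval_map_intCast_eq_zero_iff (R := ℂ),
    ← aeval_map_algebraMap ℂ]
  refine aeval_eq_zero_of_dvd_aeval_eq_zero hdvd ?_
  rw [aeval_map_algebraMap, ← map_intCast_map_algebraMap]
  exact aeval_map_minpoly _

lemma exists_prod_X_sub_natCast_dvd {d : ℕ} {e : ℕ → ℕ} (he0 : ∀ i < d, 0 < e i)
    (he : ∀ i, 0 < i → i < d → 2 ≤ e i) :
    ∃ ms : Multiset ℕ, (∀ m ∈ ms, 2 ≤ m) ∧
      ∏ i ∈ Finset.range d, (X - (e i : ℤ[X])) ∣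
        (X - 1) * (ms.map fun m : ℕ => (X - (m : ℤ[X]))).prod := by
  rcases d with _ | d
  · exact ⟨0, by simp, by simp⟩
  set tail := (Multiset.range d).map fun i => e (i + 1)
  have htail : ∀ m ∈ tail, 2 ≤ m := by
    intro m hm
    obtain ⟨i, hi, rfl⟩ := Multiset.mem_map.1 hm
    exact he _ i.succ_pos (Nat.succ_lt_succ (Multiset.mem_range.1 hi))
  have hprod : ∏ i ∈ Finset.range (d + 1), (X - (e i : ℤ[X])) =
      (X - (e 0 : ℤ[X])) * (tail.map fun m : ℕ => (X - (m : ℤ[X]))).prod := by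
    rw [Finset.prod_range_succ', mul_comm, Multiset.map_map]
    rfl
  obtain h0 | h0 := (Nat.succ_le_of_lt (he0 0 d.succ_pos)).eq_or_lt
  · refine ⟨tail, htail, ?_⟩
    rw [hprod, ← h0]
    simp
  · refine ⟨e 0 ::ₘ tail, Multiset.forall_mem_cons.2 ⟨h0, htail⟩, ?_⟩
    rw [hprod, Multiset.map_cons, Multiset.prod_cons]
    exact dvd_mul_left _ _

lemma exists_aeval_pow_eq_zero
    (hEig : ∀ lam : ℂ, (A.map (Int.cast : ℤ → ℂ)).charpoly.IsRoot lam →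
      ∃ l : ℕ, 0 < l ∧ ∃ m : ℕ, 0 < m ∧ lam ^ l = (m : ℂ))
    (hmin : (minpoly ℚ (A.map (Int.cast : ℤ → ℚ))).map (algebraMap ℚ ℂ) =
      ∏ i ∈ Finset.range (minpolyDeg A), (X - C (lam i)))
    (hlami : ∀ i, 0 < i → i < minpolyDeg A → 1 < ‖lam i‖) :
    ∃ L : ℕ, minpolyDeg A ≤ L ∧ 0 < L ∧ ∃ ms : Multiset ℕ, (∀ m ∈ ms, 2 ≤ m) ∧
      aeval (A ^ L) ((X - 1) * (ms.map fun m : ℕ => (X - (m : ℤ[X]))).prod) = 0 := by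
  obtain ⟨L, hAL, hL, e, he⟩ := exists_forall_pow_eq_natCast
    fun i hi => hEig (lam i) (isRoot_charpoly_of_map_minpoly_eq_prod hmin hi)
  have htwo : ∀ i, 0 < i → i < minpolyDeg A → 2 ≤ e i := by
    intro i hi0 hi
    have hnorm : 1 < ‖lam i ^ L‖ := by
      rw [norm_pow]
      exact one_lt_pow₀ (hlami i hi0 hi) hL.ne'
    rw [(he i hi).2, Complex.norm_natCast] at hnorm
    exact_mod_cast hnorm
  obtain ⟨ms, hms, hdvd⟩ := exists_prod_X_sub_natCast_dvd (fun i hi => (he i hi).1) htwo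
  exact ⟨L, hAL, hL, ms, hms, aeval_eq_zero_of_dvd_aeval_eq_zero hdvd
    (aeval_pow_prod_eq_zero hmin fun i hi => (he i hi).2)⟩

end MinimalPolynomial

end Spectrum

theorem slow_uniformity_p_sq_general (k : ℕ) (hk : 1 ≤ k)
    (A : Matrix (Fin k) (Fin k) ℤ)
    (hEig : ∀ lam : ℂ, (A.map (Int.cast : ℤ → ℂ)).charpoly.IsRoot lam →
      ∃ l : ℕ, 0 < l ∧ ∃ m : ℕ, 0 < m ∧ lam ^ l = (m : ℂ))
    (lam : ℕ → ℂ)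
    (hmin : (minpoly ℚ (A.map (Int.cast : ℤ → ℚ))).map (algebraMap ℚ ℂ) =
      ∏ i ∈ Finset.range (minpolyDeg A), (Polynomial.X - Polynomial.C (lam i)))
    (hlami : ∀ i, 0 < i → i < minpolyDeg A → 1 < ‖lam i‖)
    (μ : (Fin k → ℤ) → ℝ) (hμ0 : ∀ x, 0 ≤ μ x) (hμ1 : HasSum μ 1)
    (y : Fin k → (Fin k → ℤ)) (hy : ∀ j, y j ∈ VdSet A μ) :
    ∃ (a c : ℝ) (N : ℕ), 0 < a ∧ 0 < c ∧
      ∀ p : ℕ, N < p → Int.gcd A.det p = 1 → Int.gcd (colMat y).det p = 1 →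
        ∀ n : ℕ, c * (p : ℝ) ^ 2 ≤ n →
          tvDist A μ p n ≤ 2 ^ (k - 1) * Real.exp (-(a * n) / (p : ℝ) ^ 2) := by
  have : Nonempty (Fin k) := ⟨⟨0, hk⟩⟩
  obtain ⟨L, hAL, hL, ms, hms, hann⟩ := exists_aeval_pow_eq_zero hEig hmin hlami
  obtain ⟨a, c, ha, hc, hdist⟩ := exists_tvDist_le_of_aeval_pow_eq_zero hL hAL hms hann hμ0 hμ1 hy
  refine ⟨a, c, ms.card + 1, ha, hc, fun p hp hA hB n hn => ?_⟩
  have hexp := Real.exp_pos (-(a * n) / (p : ℝ) ^ 2)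
  calc tvDist A μ p n ≤ Real.exp (-(a * n) / (p : ℝ) ^ 2) := by linarith [hdist p hp hA hB n hn]
    _ ≤ 2 ^ (k - 1) * Real.exp (-(a * n) / (p : ℝ) ^ 2) :=
        le_mul_of_one_le_left hexp.le (one_le_pow₀ one_le_two)

/-- **Theorem 3.9**: suppose every (complex) eigenvalue `λ` of `A` is nonzero and satisfies
`λ^l ∈ ℕ*` for some positive integer `l`, and the roots `λ_1, …, λ_d` of the minimal
polynomial of `A` (of degree `d`) satisfy `|λ_1| = 1` and `|λ_i| > 1` for `i = 2, …, d`;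
assume also that the support of `μ` is not parallel to a proper subspace of `ℚ^k` invariant
under `A`.  Then there are `α, c > 0` and `N ∈ ℕ` such that for all `p > N` with
`gcd(det A, p) = gcd(det B, p) = 1` and all `n ≥ c p²`,
`‖P_n − U‖ ≤ 2^{k−1} exp(−α n / p²)`. -/
theorem slow_uniformity_p_sq (k : ℕ) (hk : 1 ≤ k)
    (A : Matrix (Fin k) (Fin k) ℤ) (hA : A.det ≠ 0)
    (hEig : ∀ lam : ℂ, (A.map (Int.cast : ℤ → ℂ)).charpoly.IsRoot lam →
      lam ≠ 0 ∧ ∃ l : ℕ, 0 < l ∧ ∃ m : ℕ, 0 < m ∧ lam ^ l = (m : ℂ))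
    (lam : ℕ → ℂ)
    (hmin : (minpoly ℚ (A.map (Int.cast : ℤ → ℚ))).map (algebraMap ℚ ℂ) =
      ∏ i ∈ Finset.range (minpolyDeg A), (Polynomial.X - Polynomial.C (lam i)))
    (hlam1 : ‖lam 0‖ = 1)
    (hlami : ∀ i, 0 < i → i < minpolyDeg A → 1 < ‖lam i‖)
    (μ : (Fin k → ℤ) → ℝ) (hμ0 : ∀ x, 0 ≤ μ x) (hμ1 : HasSum μ 1)
    (hpar : ¬ ParallelInv A μ)
    (y : Fin k → (Fin k → ℤ)) (hy : ∀ j, y j ∈ VdSet A μ)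
    (hybasis : (colMat y).det ≠ 0) :
    ∃ (a c : ℝ) (N : ℕ), 0 < a ∧ 0 < c ∧
      ∀ p : ℕ, N < p → Int.gcd A.det p = 1 → Int.gcd (colMat y).det p = 1 →
        ∀ n : ℕ, c * (p : ℝ) ^ 2 ≤ n →
          tvDist A μ p n ≤ 2 ^ (k - 1) * Real.exp (-(a * n) / (p : ℝ) ^ 2) :=
  slow_uniformity_p_sq_general k hk A (fun z hz => (hEig z hz).2) lam hmin hlami μ hμ0 hμ1 y hy
end
end

section
/- Suppose A has a complex eigenvalue λ with |λ| > 1, the support of μ is not parallel to a proper subspace of ℚ^k invariant under A, and E[‖B_n‖_∞²] < ∞. Then there exist a constant c > 0, N ∈ ℕ, and a function η : ℕ → ℝ with η(p) → 1 as p → ∞, such that for every integer p > N with gcd(det(A), p) = 1 and gcd(det(B), p) = 1, and every n ≤ c·ln p, one has ‖P_n − U‖ ≥ (1/2)·η(p). Consequently, O(ln p) steps are needed to reach the uniform distribution. -/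
open scoped BigOperators
open Matrix

noncomputable section

/-!
The chain on `ℤ^k` satisfies `E‖X_{n+1}‖ ≤ ‖A‖ E‖X_n‖ + E‖B_n‖`, so `E‖X_n‖` grows at most like
`L ^ n` with `L = ‖A‖ + 2`. If `n ≤ ln p / (4 ln L)` this is at most a multiple of `p ^ (1/4)`, and
by Markov's inequality all but `O(p ^ (-1/4))` of the mass of `X_n` lies in the box of radius `√p`.
The image of that box modulo `p` has at most `(3√p)^k` of the `p ^ k` points, a vanishing
proportion, so `P_n` is far from uniform.
-/

section Summation

variable {α β : Type*}

lemma summable_mul_of_summable_mul_sq {w f : α → ℝ} (hw0 : ∀ a, 0 ≤ w a) (hw : Summable w)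
    (hf : Summable fun a => w a * f a ^ 2) : Summable fun a => w a * f a := by
  refine Summable.of_norm_bounded (hw.add hf) fun a => ?_
  have habs : |f a| ≤ 1 + f a ^ 2 := by
    nlinarith [sq_nonneg (|f a| - 1), sq_abs (f a), abs_nonneg (f a)]
  calc ‖w a * f a‖ = w a * |f a| := by rw [norm_mul, Real.norm_of_nonneg (hw0 a), Real.norm_eq_abs]
    _ ≤ w a * (1 + f a ^ 2) := mul_le_mul_of_nonneg_left habs (hw0 a)
    _ = w a + w a * f a ^ 2 := by ring

lemma hasSum_prod_mul_of_nonneg {f : α → ℝ} {g : β → ℝ} {s t : ℝ} (hf0 : ∀ a, 0 ≤ f a)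
    (hg0 : ∀ b, 0 ≤ g b) (hf : HasSum f s) (hg : HasSum g t) :
    HasSum (fun q : α × β => f q.1 * g q.2) (s * t) :=
  hf.mul hg (hf.summable.mul_of_nonneg hg.summable hf0 hg0)

lemma sum_le_sum_image_tsum_fiber [DecidableEq β] {D : α → ℝ} (hD0 : ∀ a, 0 ≤ D a)
    (hD : Summable D) (f : α → β) (T : Finset α) :
    ∑ a ∈ T, D a ≤ ∑ b ∈ T.image f, ∑' a : {a // f a = b}, D a := by
  rw [← Finset.sum_fiberwise_of_maps_to fun a ha => Finset.mem_image_of_mem f ha]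
  refine Finset.sum_le_sum fun b _ => ?_
  have hfiber : Summable fun a : {a // f a = b} => D a := hD.subtype {a | f a = b}
  rw [← Finset.sum_subtype_eq_sum_filter]
  exact hfiber.sum_le_tsum _ fun a _ => hD0 a

lemma sum_sub_le_half_sum_abs_sub [Fintype α] {f g : α → ℝ} (hfg : ∑ a, f a = ∑ a, g a)
    (S : Finset α) : ∑ a ∈ S, (f a - g a) ≤ (1 / 2) * ∑ a, |f a - g a| := by
  classical
  have hzero : ∑ a ∈ S, (f a - g a) + ∑ a ∈ Sᶜ, (f a - g a) = 0 := by
    rw [Finset.sum_add_sum_compl, Finset.sum_sub_distrib, hfg, sub_self]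
  have hsplit := Finset.sum_add_sum_compl S fun a => |f a - g a|
  have hS := Finset.sum_le_sum fun a (_ : a ∈ S) => le_abs_self (f a - g a)
  have hSc := Finset.sum_le_sum fun a (_ : a ∈ Sᶜ) => neg_le_abs (f a - g a)
  rw [Finset.sum_neg_distrib] at hSc
  linarith

end Summation

section AffineStep

variable {G : Type*}

lemma hasSum_affineStep_mul [AddGroup G] {D μ g : G → ℝ} {φ : G → G} {s : ℝ}
    (h : HasSum (fun q : G × G => D q.1 * μ q.2 * g (q.2 + φ q.1)) s) :
    HasSum (fun x => (∑' y, D y * μ (x - φ y)) * g x) s := by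
  let e : G × G ≃ G × G :=
    { toFun := fun q => (q.2, q.1 - φ q.2)
      invFun := fun q => (q.2 + φ q.1, q.1)
      left_inv := fun q => by simp
      right_inv := fun q => by simp }
  have hxy : HasSum (fun q : G × G => D q.2 * μ (q.1 - φ q.2) * g q.1) s := by
    simpa only [Function.comp_def, e, Equiv.coe_fn_mk, sub_add_cancel] using e.hasSum_iff.mpr h
  refine hxy.prod_fiberwise fun x => ?_
  rw [← tsum_mul_right]
  exact (hxy.summable.prod_factor x).hasSum

/-- `D` is the mass function of a probability distribution on `G` under which the expected norm
is finite and at most `m`. This is the invariant propagated along the chain. -/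
structure HasMeanNormLE [Norm G] (D : G → ℝ) (m : ℝ) : Prop where
  nonneg : ∀ x, 0 ≤ D x
  hasSum_one : HasSum D 1
  exists_hasSum_mul_norm : ∃ s ≤ m, HasSum (fun x => D x * ‖x‖) s

namespace HasMeanNormLE

lemma mono [Norm G] {D : G → ℝ} {m m' : ℝ} (h : HasMeanNormLE D m) (hm : m ≤ m') :
    HasMeanNormLE D m' :=
  let ⟨s, hs, hsum⟩ := h.exists_hasSum_mul_norm
  ⟨h.nonneg, h.hasSum_one, s, hs.trans hm, hsum⟩

lemma bound_nonneg [SeminormedAddGroup G] {D : G → ℝ} {m : ℝ} (h : HasMeanNormLE D m) :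
    0 ≤ m :=
  let ⟨_, hs, hsum⟩ := h.exists_hasSum_mul_norm
  (hsum.nonneg fun x => mul_nonneg (h.nonneg x) (norm_nonneg x)).trans hs

lemma dirac_zero [SeminormedAddGroup G] [DecidableEq G] :
    HasMeanNormLE (fun x : G => if x = 0 then (1 : ℝ) else 0) 0 where
  nonneg x := by split_ifs <;> norm_num
  hasSum_one := hasSum_ite_eq 0 1
  exists_hasSum_mul_norm := by
    refine ⟨0, le_rfl, ?_⟩
    convert hasSum_zero with x
    split_ifs with hx <;> simp [hx]

lemma affineStep [SeminormedAddGroup G] {D μ : G → ℝ} {m M L : ℝ} {φ : G → G}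
    (hD : HasMeanNormLE D m) (hμ : HasMeanNormLE μ M) (hL : 0 ≤ L)
    (hφ : ∀ y, ‖φ y‖ ≤ L * ‖y‖) :
    HasMeanNormLE (fun x => ∑' y, D y * μ (x - φ y)) (M + L * m) where
  nonneg x := tsum_nonneg fun y => mul_nonneg (hD.nonneg y) (hμ.nonneg _)
  hasSum_one := by
    have hprod := hasSum_prod_mul_of_nonneg hD.nonneg hμ.nonneg hD.hasSum_one hμ.hasSum_one
    simpa only [mul_one] using
      hasSum_affineStep_mul (φ := φ) (g := fun _ => 1) (by simpa only [mul_one] using hprod)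
  exists_hasSum_mul_norm := by
    obtain ⟨m', hm', hDm⟩ := hD.exists_hasSum_mul_norm
    obtain ⟨M', hM', hμM⟩ := hμ.exists_hasSum_mul_norm
    have hbound : HasSum (fun q : G × G => D q.1 * (μ q.2 * ‖q.2‖) + L * (D q.1 * ‖q.1‖ * μ q.2))
        (1 * M' + L * (m' * 1)) :=
      (hasSum_prod_mul_of_nonneg hD.nonneg (fun h => mul_nonneg (hμ.nonneg h) (norm_nonneg h))
        hD.hasSum_one hμM).add
      ((hasSum_prod_mul_of_nonneg (fun y => mul_nonneg (hD.nonneg y) (norm_nonneg y)) hμ.nonneg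
        hDm hμ.hasSum_one).mul_left L)
    have hle (q : G × G) : D q.1 * μ q.2 * ‖q.2 + φ q.1‖ ≤
        D q.1 * (μ q.2 * ‖q.2‖) + L * (D q.1 * ‖q.1‖ * μ q.2) :=
      calc D q.1 * μ q.2 * ‖q.2 + φ q.1‖ ≤ D q.1 * μ q.2 * (‖q.2‖ + L * ‖q.1‖) :=
            mul_le_mul_of_nonneg_left ((norm_add_le _ _).trans (by gcongr; exact hφ q.1))
              (mul_nonneg (hD.nonneg _) (hμ.nonneg _))
        _ = D q.1 * (μ q.2 * ‖q.2‖) + L * (D q.1 * ‖q.1‖ * μ q.2) := by ring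
    have hsummable : Summable fun q : G × G => D q.1 * μ q.2 * ‖q.2 + φ q.1‖ :=
      .of_nonneg_of_le (fun q => mul_nonneg (mul_nonneg (hD.nonneg _) (hμ.nonneg _))
        (norm_nonneg _)) hle hbound.summable
    refine ⟨_, ?_, hasSum_affineStep_mul (g := norm) hsummable.hasSum⟩
    calc _ ≤ 1 * M' + L * (m' * 1) := hasSum_le hle hsummable.hasSum hbound
      _ = M' + L * m' := by ring
      _ ≤ M + L * m := by gcongr

lemma one_sub_div_le_sum [SeminormedAddGroup G] {D : G → ℝ} {m r : ℝ} (h : HasMeanNormLE D m)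
    (hr : 0 < r) {T : Finset G} (hT : ∀ x ∉ T, r ≤ ‖x‖) : 1 - m / r ≤ ∑ x ∈ T, D x := by
  obtain ⟨s, hs, hsum⟩ := h.exists_hasSum_mul_norm
  have hin : HasSum ((T : Set G).indicator D) (∑ x ∈ T, D x) :=
    hasSum_subtype_iff_indicator.mp (T.hasSum D)
  have hmarkov (x : G) : D x ≤ (T : Set G).indicator D x + D x * ‖x‖ / r := by
    by_cases hx : x ∈ T
    · rw [Set.indicator_of_mem (Finset.mem_coe.mpr hx), le_add_iff_nonneg_right]
      exact div_nonneg (mul_nonneg (h.nonneg x) (norm_nonneg x)) hr.le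
    · rw [Set.indicator_of_notMem (Finset.mem_coe.not.mpr hx), zero_add, le_div_iff₀ hr]
      exact mul_le_mul_of_nonneg_left (hT x hx) (h.nonneg x)
  have hone := hasSum_le hmarkov h.hasSum_one (hin.add (hsum.div_const r))
  have hdiv : s / r ≤ m / r := by gcongr
  linarith

end HasMeanNormLE

end AffineStep

section IntegerVectors

variable {ι : Type*} [Fintype ι]

lemma natCast_sup_natAbs_eq_norm (x : ι → ℤ) :
    ((Finset.univ.sup fun i => (x i).natAbs : ℕ) : ℝ) = ‖x‖ := by
  rw [Pi.norm_def, ← NNReal.coe_natCast, Nat.cast_finsetSup]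
  simp only [NNReal.natCast_natAbs]

/-- The integer vectors of sup-norm at most `r`, as a finite set. -/
def intBox (ι : Type*) [Fintype ι] [DecidableEq ι] (r : ℝ) : Finset (ι → ℤ) :=
  Fintype.piFinset fun _ => Finset.Icc (-⌊r⌋) ⌊r⌋

variable [DecidableEq ι]

lemma mem_intBox {r : ℝ} (hr : 0 ≤ r) {x : ι → ℤ} : x ∈ intBox ι r ↔ ‖x‖ ≤ r := by
  simp only [intBox, Fintype.mem_piFinset, Finset.mem_Icc, pi_norm_le_iff_of_nonneg hr]
  refine forall_congr' fun i => ?_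
  rw [← abs_le, Int.le_floor, Int.cast_abs, Int.norm_eq_abs]

lemma card_intBox_le {r : ℝ} (hr : 0 ≤ r) :
    ((intBox ι r).card : ℝ) ≤ (2 * r + 1) ^ Fintype.card ι := by
  have hfloor : 0 ≤ ⌊r⌋ := Int.floor_nonneg.mpr hr
  rw [intBox, Fintype.card_piFinset, Finset.prod_const, Finset.card_univ, Int.card_Icc,
    Nat.cast_pow]
  gcongr
  calc (((⌊r⌋ + 1 - -⌊r⌋).toNat : ℕ) : ℝ) = ((⌊r⌋ + 1 - -⌊r⌋ : ℤ) : ℝ) := by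
        rw [← Int.cast_natCast, Int.toNat_of_nonneg (by omega)]
    _ = 2 * (⌊r⌋ : ℝ) + 1 := by push_cast; ring
    _ ≤ 2 * r + 1 := by gcongr; exact Int.floor_le r

end IntegerVectors

section Chain

variable {k : ℕ}

open scoped Matrix.Norms.Operator in
lemma exists_hasMeanNormLE_chainDist (A : Matrix (Fin k) (Fin k) ℤ) {μ : (Fin k → ℤ) → ℝ} {M : ℝ}
    (hμ : HasMeanNormLE μ M) :
    ∃ L : ℝ, 1 < L ∧ ∀ n, HasMeanNormLE (chainDist A μ n) (M * L ^ n) := by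
  have hM : 0 ≤ M := hμ.bound_nonneg
  have hL : 1 < ‖A‖ + 2 := by linarith [norm_nonneg A]
  refine ⟨‖A‖ + 2, hL, fun n => ?_⟩
  induction n with
  | zero => exact HasMeanNormLE.dirac_zero.mono (by positivity)
  | succ n ih =>
    refine (ih.affineStep hμ (norm_nonneg A) (linfty_opNorm_mulVec A)).mono ?_
    calc M + ‖A‖ * (M * (‖A‖ + 2) ^ n)
        ≤ M * (‖A‖ + 2) ^ n + ‖A‖ * (M * (‖A‖ + 2) ^ n) := by
          gcongr
          exact le_mul_of_one_le_right hM (one_le_pow₀ hL.le)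
      _ = M * (‖A‖ + 2) ^ n * (‖A‖ + 1) := by ring
      _ ≤ M * (‖A‖ + 2) ^ n * (‖A‖ + 2) := by gcongr; norm_num
      _ = M * (‖A‖ + 2) ^ (n + 1) := by ring

lemma tvDist_nonneg (A : Matrix (Fin k) (Fin k) ℤ) (μ : (Fin k → ℤ) → ℝ) (p n : ℕ) :
    0 ≤ tvDist A μ p n :=
  mul_nonneg (by norm_num) (tsum_nonneg fun _ => abs_nonneg _)

lemma sum_chainDistMod_eq_sum_unif {A : Matrix (Fin k) (Fin k) ℤ} {μ : (Fin k → ℤ) → ℝ} {n : ℕ}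
    (h : HasSum (chainDist A μ n) 1) (p : ℕ) [NeZero p] :
    ∑ x, chainDistMod A μ p n x = ∑ _x : Fin k → ZMod p, unif k p := by
  have hmod : HasSum (chainDistMod A μ p n) 1 := h.tsum_fiberwise fun y i => (y i : ZMod p)
  rw [(hasSum_fintype _).unique hmod]
  simp [unif, NeZero.ne p]

lemma le_tvDist_of_hasMeanNormLE {A : Matrix (Fin k) (Fin k) ℤ} {μ : (Fin k → ℤ) → ℝ} {n : ℕ}
    {m r : ℝ} (h : HasMeanNormLE (chainDist A μ n) m) (hr : 0 < r) {p : ℕ} (hp : 0 < p) :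
    1 - m / r - ((2 * r + 1) / p) ^ k ≤ tvDist A μ p n := by
  classical
  have : NeZero p := ⟨hp.ne'⟩
  set reduce : (Fin k → ℤ) → (Fin k → ZMod p) := fun y i => (y i : ZMod p)
  set S := (intBox (Fin k) r).image reduce
  have hmass : 1 - m / r ≤ ∑ x ∈ S, chainDistMod A μ p n x :=
    (h.one_sub_div_le_sum hr fun x hx => (not_le.mp ((mem_intBox hr.le).not.mp hx)).le).trans
      (sum_le_sum_image_tsum_fiber h.nonneg h.hasSum_one.summable reduce _)
  have hunif : ∑ _x ∈ S, unif k p ≤ ((2 * r + 1) / p) ^ k := by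
    have hcard : (S.card : ℝ) ≤ (2 * r + 1) ^ k := by
      simpa only [Fintype.card_fin] using
        (Nat.cast_le.mpr Finset.card_image_le).trans (card_intBox_le (ι := Fin k) hr.le)
    rw [Finset.sum_const, nsmul_eq_mul, unif, div_pow, div_eq_mul_inv]
    gcongr
  calc 1 - m / r - ((2 * r + 1) / p) ^ k
      ≤ ∑ x ∈ S, (chainDistMod A μ p n x - unif k p) := by
        rw [Finset.sum_sub_distrib]
        exact sub_le_sub hmass hunif
    _ ≤ (1 / 2) * ∑ x, |chainDistMod A μ p n x - unif k p| :=
        sum_sub_le_half_sum_abs_sub (sum_chainDistMod_eq_sum_unif h.hasSum_one p) S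
    _ = tvDist A μ p n := by
        rw [tvDist, tsum_fintype (L := .unconditional _)]

end Chain

section Asymptotics

lemma pow_le_sqrt_sqrt {L x : ℝ} (hL : 1 < L) (hx : 0 < x) {n : ℕ}
    (hn : (n : ℝ) ≤ 1 / (4 * Real.log L) * Real.log x) : L ^ n ≤ √√x := by
  have hlogL : 0 < Real.log L := Real.log_pos hL
  rw [← Real.log_le_log_iff (by positivity) (by positivity), Real.log_pow,
    Real.log_sqrt (Real.sqrt_nonneg x), Real.log_sqrt hx.le]
  calc n * Real.log L ≤ 1 / (4 * Real.log L) * Real.log x * Real.log L := by gcongr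
    _ = Real.log x / 2 / 2 := by field_simp; ring

lemma two_mul_sqrt_add_one_div_le {x : ℝ} (hx : 1 ≤ x) : (2 * √x + 1) / x ≤ 3 / √x := by
  have hsqrt : 1 ≤ √x := Real.one_le_sqrt.mpr hx
  calc (2 * √x + 1) / x ≤ 3 * √x / x := by gcongr; linarith
    _ = 3 / √x := by rw [mul_div_assoc, Real.sqrt_div_self', mul_one_div]

lemma tendsto_one_sub_div_sqrt_sqrt_sub_div_sqrt_pow (M : ℝ) {k : ℕ} (hk : k ≠ 0) :
    Filter.Tendsto (fun x : ℝ => 1 - M / √√x - (3 / √x) ^ k) Filter.atTop (nhds 1) := by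
  have hsqrt := Real.tendsto_sqrt_atTop
  simpa [hk] using ((tendsto_const_nhds (x := (1 : ℝ))).sub
    ((hsqrt.comp hsqrt).const_div_atTop M)).sub ((hsqrt.const_div_atTop 3).pow k)

end Asymptotics

theorem lower_bound_ln_general {k : ℕ} (hk : k ≠ 0) (A : Matrix (Fin k) (Fin k) ℤ)
    {μ : (Fin k → ℤ) → ℝ} (hμ0 : ∀ x, 0 ≤ μ x) (hμ1 : HasSum μ 1)
    (hL1 : Summable fun h => μ h * ‖h‖) :
    ∃ (c : ℝ) (η : ℕ → ℝ), 0 < c ∧ Filter.Tendsto η Filter.atTop (nhds 1) ∧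
      ∀ p : ℕ, 0 < p → ∀ n : ℕ, (n : ℝ) ≤ c * Real.log p → η p ≤ tvDist A μ p n := by
  set M := ∑' h, μ h * ‖h‖
  have hμ : HasMeanNormLE μ M := ⟨hμ0, hμ1, M, le_rfl, hL1.hasSum⟩
  obtain ⟨L, hL, hchain⟩ := exists_hasMeanNormLE_chainDist A hμ
  have hlogL : 0 < Real.log L := Real.log_pos hL
  refine ⟨1 / (4 * Real.log L), fun p => 1 - M / √√(p : ℝ) - (3 / √(p : ℝ)) ^ k, by positivity,
    (tendsto_one_sub_div_sqrt_sqrt_sub_div_sqrt_pow M hk).comp tendsto_natCast_atTop_atTop,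
    fun p hp n hn => ?_⟩
  have hp1 : (1 : ℝ) ≤ p := by exact_mod_cast hp
  have hmean : HasMeanNormLE (chainDist A μ n) (M * √√(p : ℝ)) :=
    (hchain n).mono
      (mul_le_mul_of_nonneg_left (pow_le_sqrt_sqrt hL (by linarith) hn) hμ.bound_nonneg)
  calc 1 - M / √√(p : ℝ) - (3 / √(p : ℝ)) ^ k
      ≤ 1 - M * √√(p : ℝ) / √(p : ℝ) - ((2 * √(p : ℝ) + 1) / p) ^ k := by
        rw [mul_div_assoc, Real.sqrt_div_self', mul_one_div]
        exact sub_le_sub_left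
          (pow_le_pow_left₀ (by positivity) (two_mul_sqrt_add_one_div_le hp1) k) _
    _ ≤ tvDist A μ p n := le_tvDist_of_hasMeanNormLE hmean (by positivity) hp

/-- **Theorem 3.10**: if `A` has a complex eigenvalue `λ` with `|λ| > 1`, the support of
`μ` is not parallel to a proper subspace of `ℚ^k` invariant under `A`, and
`Σ_h μ(h) ‖h‖_∞² < ∞`, then there are `c > 0`, `N ∈ ℕ` and `η : ℕ → ℝ` with `η(p) → 1`,
such that for all `p > N` with `gcd(det A, p) = gcd(det B, p) = 1` and all `n ≤ c ln p`,
`‖P_n − U‖ ≥ (1/2) η(p)`.  (Hence `O(ln p)` steps are needed.) -/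
theorem lower_bound_ln (k : ℕ) (hk : 1 ≤ k)
    (A : Matrix (Fin k) (Fin k) ℤ) (hA : A.det ≠ 0)
    (hEig : ∃ lam : ℂ, (A.map (Int.cast : ℤ → ℂ)).charpoly.IsRoot lam ∧
      1 < ‖lam‖)
    (μ : (Fin k → ℤ) → ℝ) (hμ0 : ∀ x, 0 ≤ μ x) (hμ1 : HasSum μ 1)
    (hL2 : Summable (fun h : Fin k → ℤ =>
      μ h * ((Finset.univ.sup fun i => (h i).natAbs : ℕ) : ℝ) ^ 2))
    (hpar : ¬ ParallelInv A μ)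
    (y : Fin k → (Fin k → ℤ)) (hy : ∀ j, y j ∈ VdSet A μ)
    (hybasis : (colMat y).det ≠ 0) :
    ∃ (c : ℝ) (N : ℕ) (η : ℕ → ℝ), 0 < c ∧ Filter.Tendsto η Filter.atTop (nhds 1) ∧
      ∀ p : ℕ, N < p → Int.gcd A.det p = 1 → Int.gcd (colMat y).det p = 1 →
        ∀ n : ℕ, (n : ℝ) ≤ c * Real.log p →
          (1 / 2) * η p ≤ tvDist A μ p n := by
  simp only [natCast_sup_natAbs_eq_norm] at hL2
  obtain ⟨c, η, hc, hη, h⟩ := lower_bound_ln_general (by omega) A hμ0 hμ1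
    (summable_mul_of_summable_mul_sq hμ0 hμ1.summable hL2)
  exact ⟨c, 0, η, hc, hη, fun p hp _ _ n hn => by linarith [h p hp n hn, tvDist_nonneg A μ p n]⟩
end
end
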